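/- Let λ=(λ_1,...,λ_g) be the partition associated to a gap sequence G of genus g, let ξ_μ ∈ ℂ be arbitrary scalars for partitions μ with λ < μ, and let τ(t) = s_λ(t) + Σ_{λ<μ} ξ_μ s_μ(t). For 0 ≤ k ≤ g define τ^{(k)}(t) = s_{(λ_1,...,λ_k)}(t) + Σ_μ ξ_μ s_{(μ_1,...,μ_k)}(t), the sum over partitions μ=(μ_1,...,μ_g) with λ < μ and μ_i = λ_i for k+1 ≤ i ≤ g (τ^{(0)} = 1, τ^{(g)} = τ). Then: (i) ∂_{a^{(k)}_1}⋯∂_{a^{(k)}_{m_k}} τ(t) evaluated at t = [x_1]+⋯+[x_k] equals c_k · τ^{(k)}([x_1]+⋯+[x_k]) as formal power series in x_1,...,x_k, where c_k ∈ {±1} is the sign of the permutation of (g−k−1,...,1,0) given by (w_1^*,...,w_{m_k}^*, w_{g−k−m_k},...,w_1), with c_g = 1 and the empty derivative for k = g; (ii) for 1 ≤ k ≤ g, τ^{(k)}([x_1]+⋯+[x_k]) = τ^{(k−1)}([x_1]+⋯+[x_{k−1}])·x_k^{λ_k} + O(x_k^{λ_k+1}), i.e., the coefficients of x_k^j vanish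 for j < λ_k and the coefficient of x_k^{λ_k} is τ^{(k−1)}([x_1]+⋯+[x_{k−1}]). -/

import Mathlib

open MvPolynomial

noncomputable def pS (n : ℕ) : MvPolynomial ℕ ℂ :=
  ∑ m ∈ Finset.range (n + 1), (Nat.factorial m : ℂ)⁻¹ •
    ∑ c ∈ Finset.univ.filter
        (fun c : Fin m → Fin (n + 1) =>
          (∑ j, ((c j : ℕ))) = n ∧ ∀ j, 1 ≤ (c j : ℕ)),
      ∏ j, X ((c j : ℕ))

noncomputable def pz (n : ℤ) : MvPolynomial ℕ ℂ :=
  if 0 ≤ n then pS n.toNat else 0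

noncomputable def schur {l : ℕ} (lam : Fin l → ℕ) : MvPolynomial ℕ ℂ :=
  Matrix.det (Matrix.of fun a b : Fin l =>
    pz ((lam a : ℤ) - ((a : ℕ) : ℤ) + ((b : ℕ) : ℤ)))

def pad {l : ℕ} (lam : Fin l → ℕ) (a : ℕ) : ℕ := if h : a < l then lam ⟨a, h⟩ else 0

/-- A partition: an antitone, eventually-zero sequence of naturals
(`toFun a` is `λ_{a+1}`, i.e. 0-indexed). -/
structure Ptn where
  toFun : ℕ → ℕ
  anti : ∀ i j : ℕ, i ≤ j → toFun j ≤ toFun i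
  bdd : ∃ N, toFun N = 0

/-- The length (number of nonzero parts) of a partition. -/
noncomputable def Ptn.len (μ : Ptn) : ℕ := Nat.find μ.bdd

/-- The Schur function of a partition. -/
noncomputable def Ptn.schurP (μ : Ptn) : MvPolynomial ℕ ℂ :=
  schur (fun a : Fin μ.len => μ.toFun a)

/-- `λ < μ` in the componentwise order, `λ` given as a finite tuple padded by zeros. -/
def PtnGt {l : ℕ} (lam : Fin l → ℕ) (μ : Ptn) : Prop :=
  (∀ i, pad lam i ≤ μ.toFun i) ∧ (∃ i, pad lam i ≠ μ.toFun i)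

/-- The coefficients (as a formal power series in `t`) of
`τ(t) = s_λ(t) + Σ_{λ<μ} ξ_μ s_μ(t)`. -/
noncomputable def tauCoeff {l : ℕ} (lam : Fin l → ℕ) (ξ : Ptn → ℂ) (β : ℕ →₀ ℕ) : ℂ :=
  MvPolynomial.coeff β (schur lam)
    + ∑ᶠ (μ : Ptn) (_ : PtnGt lam μ), ξ μ * MvPolynomial.coeff β μ.schurP

/-- The coefficients of
`τ^{(k)}(t) = s_{(λ_1,...,λ_k)}(t) + Σ_μ ξ_μ s_{(μ_1,...,μ_k)}(t)`,
the sum over partitions `μ` with `λ < μ` and `μ_i = λ_i` for `i ≥ k+1`. -/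
noncomputable def tauKCoeff {l : ℕ} (lam : Fin l → ℕ) (ξ : Ptn → ℂ) (k : ℕ)
    (β : ℕ →₀ ℕ) : ℂ :=
  MvPolynomial.coeff β (schur (fun a : Fin k => pad lam a))
    + ∑ᶠ (μ : Ptn) (_ : PtnGt lam μ ∧ ∀ i, k ≤ i → μ.toFun i = pad lam i),
        ξ μ * MvPolynomial.coeff β (schur (fun a : Fin k => μ.toFun a))

/-- Formal partial derivative `∂_i` on coefficient functions of power series in `t`. -/
noncomputable def pdCoeff (i : ℕ) (F : (ℕ →₀ ℕ) → ℂ) (β : ℕ →₀ ℕ) : ℂ :=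
  ((β i : ℕ) + 1 : ℂ) * F (β + Finsupp.single i 1)

/-- Iterated formal derivative `∂_{i_1} ⋯ ∂_{i_r}` for `L = [i_1,...,i_r]`. -/
noncomputable def derivsCoeff (L : List ℕ) (F : (ℕ →₀ ℕ) → ℂ) : (ℕ →₀ ℕ) → ℂ :=
  L.foldr pdCoeff F

/-- The power sum `(x_1^n + ⋯ + x_k^n)/n`. -/
noncomputable def psumC (k : ℕ) (n : ℕ) : MvPolynomial (Fin k) ℂ :=
  (n : ℂ)⁻¹ • ∑ i : Fin k, X i ^ n

/-- The coefficient of the monomial `γ` (in `x_1,...,x_k`) of a formal series in `t`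
(given by its coefficient function `F`) after the substitution `t_n ↦ (x_1^n+⋯+x_k^n)/n`. -/
noncomputable def evalPS (k : ℕ) (F : (ℕ →₀ ℕ) → ℂ) (γ : Fin k →₀ ℕ) : ℂ :=
  ∑ᶠ β : (ℕ →₀ ℕ), F β * MvPolynomial.coeff γ (∏ n ∈ β.support, psumC k n ^ β n)

/-- `w_i`: the `(i+1)`-st smallest element of `G` (0-indexed: `wseq G 0 = w_1`). -/
def wseq (G : Finset ℕ) (i : ℕ) : ℕ := (G.sort (· ≤ ·)).getD i 0

/-- `w_i^*`: the `(i+1)`-st smallest element of the complement of `G`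
(0-indexed: `wstar G 0 = w_1^* = 0`). -/
noncomputable def wstar (G : Finset ℕ) (i : ℕ) : ℕ := Nat.nth (fun n => n ∉ G) i

/-- `m_k = #{i : w_i^* < g - k}`, the number of non-gaps below `g - k`. -/
def gapm (G : Finset ℕ) (g k : ℕ) : ℕ :=
  ((Finset.range (g - k)).filter (fun n => n ∉ G)).card

/-- `a^{(k)}_{j+1} = w_{g-k-j} - w_{j+1}^*` (0-indexed in `j`, `0 ≤ j < m_k`). -/
noncomputable def gapa (G : Finset ℕ) (g k j : ℕ) : ℕ :=
  wseq G (g - k - j - 1) - wstar G j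

/-- The partition associated to the gap sequence `G`:
`λ = (w_g, ..., w_1) - (g-1, ..., 1, 0)`, i.e. `λ_{a+1} = w_{g-a} - (g-1-a)` (0-indexed `a`). -/
def gapPart (G : Finset ℕ) (g a : ℕ) : ℕ := wseq G (g - 1 - a) - (g - 1 - a)

/-!
Put `b_i = μ_i + l - 1 - i`. At `t = [x_1] + ⋯ + [x_k]` the `p_n` become the complete homogeneous
polynomials, whose generating series is the inverse of the polynomial `∏ (1 - x_i T)` of degree
`k`. Its coefficients are linear relations between the columns, so a Jacobi–Trudi determinant with
`l` rows vanishes unless all of `0, …, l - k - 1` occur among the `b_i`.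

Since `∂_a p_n = p_{n-a}`, the derivative of `s_μ` is the sum of the determinants obtained by
lowering entries of `b` by the `a_j^{(k)}` in all possible ways. A term that does not vanish needs
`0, …, l - k - 1` among the lowered entries. Comparing sums forces the lowered rows to lie among the
last `l - k` and `μ_i = λ_i` there; comparing sums of squares then leaves a single term, in which
these rows are a permutation of `l - k - 1, …, 0`. This is (i).

For (ii), `s_{(μ_1, …, μ_k)}([x_1] + ⋯ + [x_k])` is `(x_1 ⋯ x_k)^{μ_k}` times the value of the Schur
function of `(μ_1 - μ_k, …, μ_{k-1} - μ_k)`, so its leading coefficient in `x_k` is obtained by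
setting `x_k = 0` in the second factor.
-/

open scoped PowerSeries Polynomial

section PowerSeriesDerivations

variable {R A : Type*} [CommRing R] [CommRing A] [Algebra R A]

lemma pow_dvd_derivation (D : Derivation R A A) {x a : A} {n : ℕ} (h : x ^ (n + 1) ∣ a) :
    x ^ n ∣ D a := by
  obtain ⟨b, rfl⟩ := h
  rw [Derivation.leibniz, Derivation.leibniz_pow, Nat.add_sub_cancel, smul_eq_mul, smul_eq_mul,
    smul_eq_mul, pow_succ]
  exact dvd_add (dvd_mul_of_dvd_left (dvd_mul_right _ _) _)
    (dvd_mul_of_dvd_right (dvd_nsmul_of_dvd _ (dvd_mul_right _ _)) _)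

/-- Every derivation of `A⟦X⟧` lowers the `X`-adic order by at most one, so it is continuous and
the chain rule for polynomials passes to the limit. -/
lemma derivation_subst (D : Derivation R A⟦X⟧ A⟦X⟧) {u : A⟦X⟧}
    (hu : PowerSeries.constantCoeff u = 0) (f : R⟦X⟧) :
    D (f.subst u) = (d⁄dX R f).subst u * D u := by
  have hsub : PowerSeries.HasSubst u := .of_constantCoeff_zero' hu
  have subst_dvd {n : ℕ} {h : R⟦X⟧} (hh : PowerSeries.X ^ n ∣ h) :
      (PowerSeries.X : A⟦X⟧) ^ n ∣ h.subst u := by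
    have := map_dvd (PowerSeries.substAlgHom hsub) hh
    rw [map_pow, PowerSeries.substAlgHom_X, PowerSeries.coe_substAlgHom] at this
    exact (pow_dvd_pow_of_dvd (PowerSeries.X_dvd_iff.mpr hu) n).trans this
  suffices ∀ n, (PowerSeries.X : A⟦X⟧) ^ n ∣ D (f.subst u) - (d⁄dX R f).subst u * D u by
    rw [← sub_eq_zero]
    ext n
    exact PowerSeries.X_pow_dvd_iff.mp (this (n + 1)) n n.lt_succ_self
  intro n
  obtain ⟨p, h, hh, rfl⟩ : ∃ (p : R[X]) (h : R⟦X⟧), PowerSeries.X ^ (n + 1) ∣ h ∧ f = h + p :=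
    ⟨_, _, dvd_mul_right _ _, PowerSeries.eq_X_pow_mul_shift_add_trunc (n + 1) f⟩
  have hp : D ((p : R⟦X⟧).subst u) = (d⁄dX R (p : R⟦X⟧)).subst u * D u := by
    rw [PowerSeries.derivative_coe, PowerSeries.subst_coe hsub, PowerSeries.subst_coe hsub,
      Derivation.map_aeval, smul_eq_mul]
  rw [PowerSeries.subst_add hsub, map_add, map_add, PowerSeries.subst_add hsub, hp, add_mul,
    add_sub_add_right_eq_sub]
  exact dvd_sub (pow_dvd_derivation D (subst_dvd hh))
    (dvd_mul_of_dvd_left (subst_dvd (pow_dvd_derivation _ hh)) _)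

/-- The derivation of `A⟦X⟧` applying a derivation of `A` to every coefficient. -/
noncomputable def coeffwiseDerivation (D : Derivation R A A) : Derivation R A⟦X⟧ A⟦X⟧ :=
  Derivation.mk'
    { toFun := fun f => PowerSeries.mk fun n => D (PowerSeries.coeff n f)
      map_add' := fun f h => by ext n; simp
      map_smul' := fun r f => by ext n; simp }
    fun f h => by
      ext n
      have hsum : D (PowerSeries.coeff n (f * h)) = ∑ p ∈ Finset.HasAntidiagonal.antidiagonal n,
          (PowerSeries.coeff p.1 f * D (PowerSeries.coeff p.2 h)
            + PowerSeries.coeff p.2 h * D (PowerSeries.coeff p.1 f)) := by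
        simp only [PowerSeries.coeff_mul, map_sum, Derivation.leibniz, smul_eq_mul]
      simp only [LinearMap.coe_mk, AddHom.coe_mk, PowerSeries.coeff_mk, smul_eq_mul, map_add]
      rw [hsum, Finset.sum_add_distrib, mul_comm h, PowerSeries.coeff_mul, PowerSeries.coeff_mul]
      simp only [PowerSeries.coeff_mk, mul_comm (D _)]

@[simp]
lemma coeff_coeffwiseDerivation (D : Derivation R A A) (f : A⟦X⟧) (n : ℕ) :
    PowerSeries.coeff n (coeffwiseDerivation D f) = D (PowerSeries.coeff n f) := by
  simp [coeffwiseDerivation]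

lemma derivation_prod {ι : Type*} [DecidableEq ι] (D : Derivation R A A) (s : Finset ι)
    (f : ι → A) : D (∏ i ∈ s, f i) = ∑ i ∈ s, D (f i) * ∏ j ∈ s.erase i, f j := by
  induction s using Finset.induction_on with
  | empty => simp
  | insert a s ha ih =>
    rw [Finset.prod_insert ha, Derivation.leibniz, ih, Finset.sum_insert ha,
      Finset.erase_insert ha, add_comm, smul_eq_mul, smul_eq_mul, mul_comm, Finset.mul_sum]
    congr 1
    refine Finset.sum_congr rfl fun i hi => ?_
    rw [Finset.erase_insert_of_ne (by rintro rfl; exact ha hi), Finset.prod_insert (by simp [ha])]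
    ring

lemma derivation_det {n : Type*} [DecidableEq n] [Fintype n] (D : Derivation R A A)
    (M : Matrix n n A) : D M.det = ∑ i, (M.updateRow i fun j => D (M i j)).det := by
  simp only [← Matrix.det_transpose M, ← Matrix.det_transpose (M.updateRow _ _),
    Matrix.det_apply, Matrix.transpose_apply, map_sum]
  rw [Finset.sum_comm]
  refine Finset.sum_congr rfl fun σ _ => ?_
  rw [← Finset.smul_sum, Units.smul_def, map_zsmul, derivation_prod, Units.smul_def]
  congr 1
  refine Finset.sum_congr rfl fun i _ => ?_
  rw [← Finset.mul_prod_erase _ _ (Finset.mem_univ i), Matrix.updateRow_self]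
  congr 1
  refine Finset.prod_congr rfl fun j hj => ?_
  rw [Matrix.updateRow_ne (Finset.ne_of_mem_erase hj)]

end PowerSeriesDerivations

section SchurSeries

/-- The exponent `∑_{n ≥ 1} t_n T^n` of the generating series of the `p_n`; the junk variable `t_0`
does not occur. -/
noncomputable def timeSeries : (MvPolynomial ℕ ℂ)⟦X⟧ :=
  PowerSeries.mk fun n => if n = 0 then 0 else X n

/-- The generating series `∑ p_n T^n` of the elementary Schur polynomials. -/
noncomputable def schurSeries : (MvPolynomial ℕ ℂ)⟦X⟧ :=
  PowerSeries.mk pS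

lemma constantCoeff_timeSeries : PowerSeries.constantCoeff timeSeries = 0 := by
  simp [timeSeries, ← PowerSeries.coeff_zero_eq_constantCoeff_apply]

lemma coeff_timeSeries_pow (n m : ℕ) :
    PowerSeries.coeff n (timeSeries ^ m) = ∑ c ∈ Finset.univ.filter
        (fun c : Fin m → Fin (n + 1) => (∑ j, ((c j : ℕ))) = n ∧ ∀ j, 1 ≤ (c j : ℕ)),
      ∏ j, (X ((c j : ℕ)) : MvPolynomial ℕ ℂ) := by
  have htrunc : PowerSeries.coeff n (timeSeries ^ m)
      = ((PowerSeries.trunc (n + 1) timeSeries) ^ m).coeff n := by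
    have h := congrArg (fun p => Polynomial.coeff p n)
      (PowerSeries.trunc_trunc_pow timeSeries (n + 1) m)
    simp only [PowerSeries.coeff_trunc, Nat.lt_succ_self, if_true] at h
    rw [← h, ← Polynomial.coe_pow, Polynomial.coeff_coe]
  rw [htrunc, PowerSeries.trunc_apply, ← Finset.range_eq_Ico, Finset.sum_range, Fintype.sum_pow,
    Polynomial.finsetSum_coeff, Finset.sum_filter]
  refine Finset.sum_congr rfl fun c _ => ?_
  have hprod : ∏ i, Polynomial.monomial (c i : ℕ) (PowerSeries.coeff (c i : ℕ) timeSeries)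
      = Polynomial.monomial (∑ i, (c i : ℕ)) (∏ i, PowerSeries.coeff (c i : ℕ) timeSeries) := by
    simp only [← Polynomial.C_mul_X_pow_eq_monomial, Finset.prod_mul_distrib, map_prod,
      Finset.prod_pow_eq_pow_sum]
  have hcoeff : ∏ i, PowerSeries.coeff (c i : ℕ) timeSeries
      = if ∀ j, 1 ≤ (c j : ℕ) then ∏ j, (X ((c j : ℕ)) : MvPolynomial ℕ ℂ) else 0 := by
    simp only [timeSeries, PowerSeries.coeff_mk]
    split_ifs with hpos
    · exact Finset.prod_congr rfl fun i _ => if_neg (Nat.one_le_iff_ne_zero.mp (hpos i))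
    · push Not at hpos
      obtain ⟨j, hj⟩ := hpos
      exact Finset.prod_eq_zero (Finset.mem_univ j) (if_pos (by lia))
  rw [hprod, hcoeff, Polynomial.coeff_monomial, ite_and]

lemma exp_subst_timeSeries : (PowerSeries.exp ℂ).subst timeSeries = schurSeries := by
  ext1 n
  rw [PowerSeries.coeff_subst' (.of_constantCoeff_zero' constantCoeff_timeSeries),
    finsum_eq_sum_of_support_subset (s := Finset.range (n + 1)), schurSeries, PowerSeries.coeff_mk,
    pS]
  · refine Finset.sum_congr rfl fun m _ => ?_
    rw [coeff_timeSeries_pow, PowerSeries.coeff_exp]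
    simp
  · intro m hm
    contrapose! hm
    have : PowerSeries.coeff n (timeSeries ^ m) = 0 :=
      PowerSeries.coeff_of_lt_order _ (lt_of_lt_of_le (by simpa using hm)
        (PowerSeries.le_order_pow_of_constantCoeff_eq_zero m constantCoeff_timeSeries))
    simp [this]

lemma derivation_schurSeries (D : Derivation ℂ (MvPolynomial ℕ ℂ)⟦X⟧ (MvPolynomial ℕ ℂ)⟦X⟧) :
    D schurSeries = schurSeries * D timeSeries := by
  rw [← exp_subst_timeSeries, derivation_subst D constantCoeff_timeSeries,
    PowerSeries.derivative_exp]

lemma coeffwiseDerivation_pderiv_schurSeries {a : ℕ} (ha : 1 ≤ a) :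
    coeffwiseDerivation (pderiv a) schurSeries = PowerSeries.X ^ a * schurSeries := by
  have htime : coeffwiseDerivation (pderiv a) timeSeries = PowerSeries.X ^ a := by
    ext1 n
    rw [coeff_coeffwiseDerivation, timeSeries, PowerSeries.coeff_mk, PowerSeries.coeff_X_pow]
    split_ifs <;> simp_all [pderiv_X]
  rw [derivation_schurSeries, htime, mul_comm]

end SchurSeries

section IntegerIndexedCoefficients

variable {R S : Type*} [CommSemiring R] [CommSemiring S]

/-- The coefficient of `T^n` for an integer `n`, equal to `0` when `n < 0`. It makes the entries of
Jacobi–Trudi determinants coefficients of one series. -/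
noncomputable def zcoeff (n : ℤ) : R⟦X⟧ →ₗ[R] R :=
  if 0 ≤ n then PowerSeries.coeff n.toNat else 0

lemma zcoeff_natCast (n : ℕ) : zcoeff (R := R) n = PowerSeries.coeff n := by simp [zcoeff]

lemma zcoeff_of_neg {n : ℤ} (h : n < 0) : zcoeff (R := R) n = 0 := by simp [zcoeff, h]

lemma zcoeff_map (φ : R →+* S) (n : ℤ) (f : R⟦X⟧) :
    zcoeff n (PowerSeries.map φ f) = φ (zcoeff n f) := by
  unfold zcoeff
  split_ifs <;> simp

lemma zcoeff_one (n : ℤ) : zcoeff n (1 : R⟦X⟧) = if n = 0 then 1 else 0 := by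
  rcases lt_or_ge n 0 with h | h
  · rw [zcoeff_of_neg h, if_neg h.ne, LinearMap.zero_apply]
  · lift n to ℕ using h
    simp only [zcoeff_natCast, PowerSeries.coeff_one, Nat.cast_eq_zero]

lemma zcoeff_X_pow_mul (n : ℤ) (j : ℕ) (f : R⟦X⟧) :
    zcoeff n (PowerSeries.X ^ j * f) = zcoeff (n - j) f := by
  rcases lt_or_ge n j with h | h
  · rw [zcoeff_of_neg (sub_neg.mpr h), LinearMap.zero_apply]
    rcases lt_or_ge n 0 with h0 | h0
    · rw [zcoeff_of_neg h0, LinearMap.zero_apply]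
    · lift n to ℕ using h0
      rw [zcoeff_natCast, PowerSeries.coeff_X_pow_mul', if_neg (by lia)]
  · obtain ⟨m, rfl⟩ : ∃ m : ℕ, n = (j + m : ℕ) := ⟨(n - j).toNat, by lia⟩
    rw [show ((j + m : ℕ) : ℤ) - j = m by push_cast; ring, zcoeff_natCast, zcoeff_natCast,
      add_comm j m, PowerSeries.coeff_X_pow_mul]

lemma zcoeff_coe_mul {l : ℕ} {Q : R[X]} (hQ : Q.natDegree < l) (n : ℤ) (f : R⟦X⟧) :
    zcoeff n ((Q : R⟦X⟧) * f) = ∑ j : Fin l, Q.coeff j * zcoeff (n - (j : ℕ)) f := by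
  have hQf : (Q : R⟦X⟧) * f = ∑ j : Fin l, Q.coeff j • (PowerSeries.X ^ (j : ℕ) * f) := by
    conv_lhs => rw [Q.as_sum_range_C_mul_X_pow' hQ]
    rw [← Polynomial.coeToPowerSeries.ringHom_apply, map_sum, Finset.sum_range, Finset.sum_mul]
    simp [PowerSeries.smul_eq_C_mul, mul_assoc]
  rw [hQf, map_sum]
  simp only [map_smul, zcoeff_X_pow_mul, smul_eq_mul]

end IntegerIndexedCoefficients

section CompleteHomogeneous

section LinearFactors

variable {ι R : Type*} [CommRing R] (x : ι → R)

/-- The polynomial `∏_{i ∈ s} (1 - x_i T)`. -/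
noncomputable def prodOneSub (s : Finset ι) : R[X] :=
  ∏ i ∈ s, (1 - Polynomial.C (x i) * Polynomial.X)

lemma natDegree_prodOneSub_le (s : Finset ι) : (prodOneSub x s).natDegree ≤ s.card := by
  refine (Polynomial.natDegree_prod_le _ _).trans ?_
  rw [Finset.card_eq_sum_ones]
  refine Finset.sum_le_sum fun i _ => ?_
  compute_degree

lemma coeff_zero_prodOneSub (s : Finset ι) : (prodOneSub x s).coeff 0 = 1 := by
  simp [prodOneSub, Polynomial.coeff_zero_prod]

lemma coe_prodOneSub (s : Finset ι) : (prodOneSub x s : R⟦X⟧)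
    = ∏ i ∈ s, (1 - PowerSeries.C (x i) * PowerSeries.X) := by
  rw [prodOneSub, ← Polynomial.coeToPowerSeries.ringHom_apply, map_prod]
  simp

lemma one_sub_mul_mk_pow (a : R) :
    (1 - PowerSeries.C a * PowerSeries.X) * PowerSeries.mk (fun n => a ^ n) = 1 := by
  have h := congrArg (PowerSeries.rescale a) (PowerSeries.mk_one_mul_one_sub_eq_one R)
  rw [map_mul, map_sub, map_one, PowerSeries.rescale_X, PowerSeries.rescale_mk, mul_comm] at h
  simpa using h

lemma derivative_prodOneSub (s : Finset ι) :
    d⁄dX R (prodOneSub x s : R⟦X⟧)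
      = -(PowerSeries.mk fun n => ∑ i ∈ s, x i ^ (n + 1)) * (prodOneSub x s : R⟦X⟧) := by
  have hsum : (PowerSeries.mk fun n => ∑ i ∈ s, x i ^ (n + 1))
      = ∑ i ∈ s, PowerSeries.C (x i) * PowerSeries.mk fun n => x i ^ n := by
    ext1 n
    simp [pow_succ']
  classical
  rw [coe_prodOneSub, derivation_prod, hsum, neg_mul, Finset.sum_mul, ← Finset.sum_neg_distrib]
  refine Finset.sum_congr rfl fun i hi => ?_
  have hD : d⁄dX R (1 - PowerSeries.C (x i) * PowerSeries.X) = -PowerSeries.C (x i) := by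
    simp [Derivation.leibniz]
  rw [← Finset.mul_prod_erase s _ hi, hD]
  linear_combination (-PowerSeries.C (x i)
    * ∏ j ∈ s.erase i, (1 - PowerSeries.C (x j) * PowerSeries.X)) * -one_sub_mul_mk_pow (x i)

end LinearFactors

/-- The substitution `t = [x_1] + ⋯ + [x_k]`. -/
noncomputable def substPsum (k : ℕ) : MvPolynomial ℕ ℂ →ₐ[ℂ] MvPolynomial (Fin k) ℂ :=
  aeval (psumC k)

lemma psumC_mul_natCast (k : ℕ) {n : ℕ} (hn : n ≠ 0) :
    psumC k n * (n : MvPolynomial (Fin k) ℂ) = ∑ i, X i ^ n := by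
  rw [psumC, ← map_natCast (C : ℂ →+* MvPolynomial (Fin k) ℂ), mul_comm, C_mul', smul_smul,
    mul_inv_cancel₀ (Nat.cast_ne_zero.mpr hn), one_smul]

/-- The generating series `∑ h_n(x_1, …, x_k) T^n` of the complete homogeneous symmetric
polynomials, obtained from that of the `p_n` by the substitution `t = [x_1] + ⋯ + [x_k]`. -/
noncomputable def homogSeries (k : ℕ) : (MvPolynomial (Fin k) ℂ)⟦X⟧ :=
  PowerSeries.map (substPsum k).toRingHom schurSeries

lemma derivative_homogSeries (k : ℕ) :
    d⁄dX _ (homogSeries k)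
      = (PowerSeries.mk fun n => ∑ i, X i ^ (n + 1)) * homogSeries k := by
  have map_derivative (f : (MvPolynomial ℕ ℂ)⟦X⟧) :
      d⁄dX _ (PowerSeries.map (substPsum k).toRingHom f)
        = PowerSeries.map (substPsum k).toRingHom (d⁄dX _ f) := by
    ext1 n
    simp [PowerSeries.coeff_derivative]
  have htime : PowerSeries.map (substPsum k).toRingHom (d⁄dX _ timeSeries)
      = PowerSeries.mk fun n => ∑ i, X i ^ (n + 1) := by
    ext1 n
    simpa [PowerSeries.coeff_derivative, timeSeries, substPsum]
      using psumC_mul_natCast k n.succ_ne_zero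
  have hschur := derivation_schurSeries ((d⁄dX (MvPolynomial ℕ ℂ)).restrictScalars ℂ)
  simp only [Derivation.restrictScalars_apply] at hschur
  rw [homogSeries, map_derivative, hschur, map_mul, htime, mul_comm]

lemma prodOneSub_univ_mul_homogSeries (k : ℕ) :
    (prodOneSub (X (R := ℂ)) (Finset.univ : Finset (Fin k)) : PowerSeries _) * homogSeries k
      = 1 := by
  apply PowerSeries.derivative.ext
  · rw [Derivation.leibniz, derivative_homogSeries, derivative_prodOneSub,
      PowerSeries.derivative_one, smul_eq_mul, smul_eq_mul]
    ring
  · rw [map_mul, map_one, Polynomial.constantCoeff_coe, coeff_zero_prodOneSub, homogSeries,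
      schurSeries, ← PowerSeries.coeff_zero_eq_constantCoeff_apply]
    simp [pS]

lemma prodOneSub_erase_mul_homogSeries {k : ℕ} (r : Fin k) :
    (prodOneSub (X (R := ℂ)) (Finset.univ.erase r) : PowerSeries _) * homogSeries k
      = PowerSeries.mk fun n => X r ^ n := by
  have huniv := prodOneSub_univ_mul_homogSeries k
  rw [coe_prodOneSub, ← Finset.mul_prod_erase _ _ (Finset.mem_univ r), ← coe_prodOneSub] at huniv
  exact left_inv_eq_right_inv (by linear_combination huniv) (one_sub_mul_mk_pow (X r))

end CompleteHomogeneous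

section ToeplitzDeterminants

open Matrix

variable {R S : Type*} [CommRing R] [CommRing S] {l : ℕ}

/-- The matrix whose `i`-th row consists of the coefficients of `f` of index
`b_i - (l - 1), …, b_i - 1, b_i`. With `b_i = λ_i + l - 1 - i` its determinant is the Jacobi–Trudi
determinant of `λ`; in terms of `b` it is an alternating function. -/
noncomputable def toeplitz (f : R⟦X⟧) (b : Fin l → ℤ) : Matrix (Fin l) (Fin l) R :=
  of fun i j => zcoeff (b i - (j.rev : ℕ)) f

lemma toeplitz_apply (f : R⟦X⟧) (b : Fin l → ℤ) (i j : Fin l) :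
    toeplitz f b i j = zcoeff (b i - (j.rev : ℕ)) f := rfl

lemma map_toeplitz (φ : R →+* S) (f : R⟦X⟧) (b : Fin l → ℤ) :
    (toeplitz f b).map φ = toeplitz (PowerSeries.map φ f) b := by
  ext1 i j
  simp [toeplitz_apply, zcoeff_map]

lemma det_toeplitz_comp_perm (f : R⟦X⟧) (b : Fin l → ℤ) (σ : Equiv.Perm (Fin l)) :
    (toeplitz f (b ∘ σ)).det = (Equiv.Perm.sign σ : ℤ) * (toeplitz f b).det :=
  det_permute σ (toeplitz f b)

lemma toeplitz_mulVec {Q : R[X]} (hQ : Q.natDegree < l) (f : R⟦X⟧) (b : Fin l → ℤ) :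
    (toeplitz f b *ᵥ fun j => Q.coeff j.rev) = fun i => zcoeff (b i) ((Q : R⟦X⟧) * f) := by
  ext1 i
  rw [zcoeff_coe_mul hQ, ← Equiv.sum_comp Fin.revPerm]
  simp [toeplitz_apply, mulVec, dotProduct, mul_comm]

/-- If `v < l - k` is not among the `b_i`, the coefficients of `T^v Q` are a linear relation between
the columns. -/
lemma exists_eq_of_det_toeplitz_ne_zero [IsDomain R] {f : R⟦X⟧} {Q : R[X]} {k v : ℕ}
    (hQ : Q.natDegree ≤ k) (hQf : (Q : R⟦X⟧) * f = 1) {b : Fin l → ℤ}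
    (hdet : (toeplitz f b).det ≠ 0) (hv : v + k < l) : ∃ i, b i = v := by
  by_contra! hb
  have hdeg : (Polynomial.X ^ v * Q).natDegree < l :=
    (Polynomial.natDegree_mul_le.trans
      (add_le_add (Polynomial.natDegree_X_pow_le v) hQ)).trans_lt hv
  have hker := eq_zero_of_mulVec_eq_zero hdet <| by
    rw [toeplitz_mulVec hdeg]
    ext1 i
    rw [Polynomial.coe_mul, Polynomial.coe_pow, Polynomial.coe_X, mul_assoc, hQf,
      zcoeff_X_pow_mul, zcoeff_one, if_neg (sub_ne_zero.mpr (hb i)), Pi.zero_apply]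
  have hQ0 := congrFun hker (Fin.rev ⟨v, by lia⟩)
  simp only [Fin.rev_rev, Pi.zero_apply] at hQ0
  have hcoeff : Q.coeff 0 = 0 := by simpa [Polynomial.coeff_X_pow_mul'] using hQ0
  have h1 := congrArg (PowerSeries.constantCoeff) hQf
  simp [hcoeff] at h1

lemma derivation_det_toeplitz {A : Type*} [CommRing A] [Algebra A R] (D : Derivation A R R)
    {a : ℕ} {f : R⟦X⟧} (hf : coeffwiseDerivation D f = PowerSeries.X ^ a * f) (b : Fin l → ℤ) :
    D (toeplitz f b).det = ∑ i, (toeplitz f (b - Pi.single i (a : ℤ))).det := by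
  have hentry (n : ℤ) : D (zcoeff n f) = zcoeff (n - a) f := by
    rw [← zcoeff_X_pow_mul, ← hf]
    unfold zcoeff
    split_ifs <;> simp
  rw [derivation_det]
  refine Finset.sum_congr rfl fun i _ => congrArg det ?_
  ext1 r j
  rcases eq_or_ne r i with rfl | hr
  · rw [updateRow_self, toeplitz_apply, toeplitz_apply, hentry, Pi.sub_apply, Pi.single_eq_same,
      sub_right_comm]
  · rw [updateRow_ne hr, toeplitz_apply, toeplitz_apply, Pi.sub_apply, Pi.single_eq_of_ne hr,
      sub_zero]

end ToeplitzDeterminants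

section SchurDeterminants

lemma zcoeff_schurSeries (n : ℤ) : zcoeff n schurSeries = pz n := by
  unfold zcoeff pz schurSeries
  split_ifs <;> simp

lemma schur_eq_det_toeplitz {l : ℕ} (lam : Fin l → ℕ) :
    schur lam = (toeplitz schurSeries fun i => (lam i + i.rev : ℕ)).det := by
  refine congrArg Matrix.det ?_
  ext1 i j
  rw [toeplitz_apply, zcoeff_schurSeries, Matrix.of_apply, Fin.val_rev, Fin.val_rev]
  congr 1
  have := i.isLt
  have := j.isLt
  lia

lemma substPsum_det_toeplitz (k : ℕ) {l : ℕ} (b : Fin l → ℤ) :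
    substPsum k (toeplitz schurSeries b).det = (toeplitz (homogSeries k) b).det := by
  rw [homogSeries, ← map_toeplitz]
  exact RingHom.map_det (substPsum k).toRingHom _

lemma schur_succ_of_eq_zero {ν : ℕ → ℕ} {n : ℕ} (hν : ν n = 0) :
    schur (fun i : Fin (n + 1) => ν i) = schur fun i : Fin n => ν i := by
  have hpz (m : ℤ) (hm : m < 0) : pz m = 0 := by simp [pz, hm]
  rw [schur, Matrix.det_succ_row _ (Fin.last n), Finset.sum_eq_single (Fin.last n)]
  · have hpz0 : pz 0 = 1 := by simp [pz, pS]
    rw [Matrix.of_apply, Fin.val_last, hν, Nat.cast_zero, zero_sub, neg_add_cancel, hpz0, mul_one,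
      Even.neg_one_pow ⟨n, rfl⟩, one_mul, Fin.succAbove_last]
    rfl
  · intro j _ hj
    have hjn := Fin.val_lt_last hj
    rw [Matrix.of_apply, Fin.val_last, hν, hpz _ (by lia), mul_zero, zero_mul]
  · simp

lemma schur_eq_of_forall_eq_zero {ν : ℕ → ℕ} {n N : ℕ} (hnN : n ≤ N) (hν : ∀ i, n ≤ i → ν i = 0) :
    schur (fun i : Fin N => ν i) = schur fun i : Fin n => ν i := by
  induction N, hnN using Nat.le_induction with
  | base => rfl
  | succ N hN ih => rw [schur_succ_of_eq_zero (hν N hN), ih]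

/-- The bialternant argument: multiplying by the coefficient matrix of the polynomials
`∏_{i ≠ r} (1 - x_i T)` turns the rows into powers of the variables. -/
lemma exists_toeplitz_homogSeries_mul_eq (k : ℕ) :
    ∃ M : Matrix (Fin k) (Fin k) (MvPolynomial (Fin k) ℂ), M.det ≠ 0 ∧
      ∀ b : Fin k → ℕ, toeplitz (homogSeries k) (fun i => b i) * M
        = Matrix.of fun i r => X r ^ b i := by
  set M : Matrix (Fin k) (Fin k) (MvPolynomial (Fin k) ℂ) :=
    Matrix.of fun j r => (prodOneSub X (Finset.univ.erase r)).coeff j.rev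
  have hM (b : Fin k → ℕ) : toeplitz (homogSeries k) (fun i => b i) * M
      = Matrix.of fun i r => X r ^ b i := by
    ext1 i r
    have hdeg : (prodOneSub (X (R := ℂ)) (Finset.univ.erase r)).natDegree < k := by
      refine (natDegree_prodOneSub_le _ _).trans_lt ?_
      rw [Finset.card_erase_of_mem (Finset.mem_univ r), Finset.card_fin]
      exact Nat.pred_lt r.pos.ne'
    have hrow := congrFun (toeplitz_mulVec hdeg (homogSeries k) fun i => (b i : ℤ)) i
    rw [prodOneSub_erase_mul_homogSeries, zcoeff_natCast, PowerSeries.coeff_mk] at hrow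
    exact hrow
  refine ⟨M, fun h => ?_, hM⟩
  have hvand : (Matrix.vandermonde (X : Fin k → MvPolynomial (Fin k) ℂ)).det = 0 := by
    rw [← Matrix.det_transpose]
    have := congrArg Matrix.det (hM fun i => i)
    rw [Matrix.det_mul, h, mul_zero] at this
    exact this.symm
  exact Matrix.det_vandermonde_ne_zero_iff.mpr (X_injective (R := ℂ)) hvand

lemma substPsum_schur_add {k : ℕ} (lam : Fin k → ℕ) (s : ℕ) :
    substPsum k (schur fun i => lam i + s) = (∏ i, X i) ^ s * substPsum k (schur lam) := by
  obtain ⟨M, hM0, hM⟩ := exists_toeplitz_homogSeries_mul_eq k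
  refine mul_right_cancel₀ hM0 ?_
  rw [schur_eq_det_toeplitz, schur_eq_det_toeplitz, substPsum_det_toeplitz,
    substPsum_det_toeplitz, mul_assoc, ← Matrix.det_mul, ← Matrix.det_mul, hM, hM,
    ← Finset.prod_pow, ← Matrix.det_mul_row]
  refine congrArg Matrix.det ?_
  ext1 i r
  simp only [Matrix.of_apply]
  ring

end SchurDeterminants

section Lowering

variable {ι : Type*} {n m k : ℕ}

/-- The numbers `0, …, n - 1` occur among the `b_i`. By `exists_eq_of_det_toeplitz_ne_zero` this is
necessary for the nonvanishing of a determinant of size `k + n` in `k` variables. -/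
def Covers (n : ℕ) (b : ι → ℤ) : Prop := ∀ v < n, ∃ i, b i = v

lemma Covers.exists_equiv [Fintype ι] {b : ι → ℤ} (h : Covers n b)
    (hn : Fintype.card ι = n) : ∃ e : Fin n ≃ ι, ∀ v, b (e v) = (v : ℕ) := by
  choose e he using fun v : Fin n => h v v.isLt
  have hinj : Function.Injective e := fun v w hvw =>
    Fin.ext <| by exact_mod_cast (he v).symm.trans (hvw ▸ he w)
  exact ⟨Equiv.ofBijective e ((Fintype.bijective_iff_injective_and_card e).mpr
    ⟨hinj, by simp [hn]⟩), he⟩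

lemma Covers.sum_comp [Fintype ι] {b : ι → ℤ} (h : Covers n b) (hn : Fintype.card ι = n)
    (g : ℤ → ℤ) : ∑ i, g (b i) = ∑ v ∈ Finset.range n, g v := by
  obtain ⟨e, he⟩ := h.exists_equiv hn
  simp [← e.sum_comp, he, Finset.sum_range]

lemma Covers.lt [Fintype ι] {b : ι → ℤ} (h : Covers n b) (hn : Fintype.card ι = n) (i : ι) :
    b i < n := by
  obtain ⟨e, he⟩ := h.exists_equiv hn
  obtain ⟨v, rfl⟩ := e.surjective i
  simp [he]

lemma Covers.exists_orderEmbedding [LinearOrder ι] {b : ι → ℤ} (h : Covers n b) :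
    ∃ e : Fin n ↪o ι, Covers n (b ∘ e) := by
  choose i hi using fun v : Fin n => h v v.isLt
  have hinj : Function.Injective i := fun v w hvw =>
    Fin.ext <| by exact_mod_cast (hi v).symm.trans (hvw ▸ hi w)
  have hcard : (Finset.univ.map ⟨i, hinj⟩).card = n := by simp
  refine ⟨Finset.orderEmbOfFin _ hcard, fun v hv => ?_⟩
  obtain ⟨r, hr⟩ : i ⟨v, hv⟩ ∈ Set.range (Finset.orderEmbOfFin _ hcard) := by simp
  exact ⟨r, by rw [Function.comp_apply, hr, hi]⟩

lemma le_natAdd_of_strictMono {e : Fin n → Fin (k + n)} (he : StrictMono e) (i : Fin n) :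
    e i ≤ Fin.natAdd k i := by
  have hcard := Finset.card_le_card_of_injOn (s := Finset.Ioi i) (t := Finset.Ioi (e i)) e
    (fun j hj => by simpa using he (Finset.mem_Ioi.mp hj)) he.injective.injOn
  rw [Fin.card_Ioi, Fin.card_Ioi] at hcard
  rw [Fin.le_def, Fin.val_natAdd]
  lia

variable [DecidableEq ι]

/-- The sequence `b` after subtracting `a_j` from its `f_j`-th entry for every `j`. Differentiating
a determinant by `∂_{a_1} ⋯ ∂_{a_m}` produces one such term for every `f`. -/
def lower (b : ι → ℤ) (a : Fin m → ℕ) (f : Fin m → ι) : ι → ℤ :=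
  b - ∑ j, Pi.single (f j) (a j : ℤ)

lemma lower_apply (b : ι → ℤ) (a : Fin m → ℕ) (f : Fin m → ι) (i : ι) :
    lower b a f i = b i - ∑ j, if f j = i then (a j : ℤ) else 0 := by
  simp [lower, Pi.single_apply, eq_comm]

lemma lower_cons (b : ι → ℤ) (a : Fin (m + 1) → ℕ) (i : ι) (f : Fin m → ι) :
    lower b a (Fin.cons i f : Fin (m + 1) → ι)
      = lower b (Fin.tail a) f - Pi.single i (a 0 : ℤ) := by
  simp only [lower, Fin.sum_univ_succ, Fin.cons_zero, Fin.cons_succ, Fin.tail]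
  abel

lemma lower_comp_of_injective {κ : Type*} [DecidableEq κ] {e : κ → ι}
    (he : Function.Injective e) (b : ι → ℤ) (a : Fin m → ℕ) (f : Fin m → κ) :
    lower b a (e ∘ f) ∘ e = lower (b ∘ e) a f := by
  ext1 i
  simp [lower_apply, he.eq_iff]

lemma lower_apply_of_forall_ne {b : ι → ℤ} {a : Fin m → ℕ} {f : Fin m → ι} {i : ι}
    (hi : ∀ j, f j ≠ i) : lower b a f i = b i := by
  simp [lower_apply, hi]

lemma lower_apply_self {f : Fin m → ι} (hf : Function.Injective f) (b : ι → ℤ) (a : Fin m → ℕ)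
    (j : Fin m) : lower b a f (f j) = b (f j) - a j := by
  simp [lower_apply, hf.eq_iff]

lemma sum_lower_comp {κ : Type*} [Fintype κ] {e : κ → ι} (he : Function.Injective e)
    (b : ι → ℤ) (a : Fin m → ℕ) (f : Fin m → ι) [DecidablePred fun j => ∃ i, f j = e i] :
    ∑ i, lower b a f (e i) = ∑ i, b (e i) - ∑ j, if ∃ i, f j = e i then (a j : ℤ) else 0 := by
  classical
  simp only [lower_apply, Finset.sum_sub_distrib]
  rw [Finset.sum_comm]
  congr 1
  refine Finset.sum_congr rfl fun j _ => ?_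
  split_ifs with hj
  · obtain ⟨i, hi⟩ := hj
    simp [hi, he.eq_iff]
  · simp [not_exists.mp hj]

variable [Fintype ι]

lemma sum_lower (b : ι → ℤ) (a : Fin m → ℕ) (f : Fin m → ι) :
    ∑ i, lower b a f i = ∑ i, b i - ∑ j, (a j : ℤ) := by
  simp only [lower_apply, Finset.sum_sub_distrib]
  rw [Finset.sum_comm]
  simp

lemma sum_lower_sq (b : ι → ℤ) (a : Fin m → ℕ) {f : Fin m → ι} (hf : Function.Injective f) :
    ∑ i, lower b a f i ^ 2
      = ∑ i, b i ^ 2 - 2 * ∑ j, b (f j) * a j + ∑ j, (a j : ℤ) ^ 2 := by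
  set d : ι → ℤ := fun i => ∑ j, if f j = i then (a j : ℤ) else 0
  have hd (c : ι → ℤ) : ∑ i, c i * d i = ∑ j, c (f j) * a j := by
    simp only [d, Finset.mul_sum, mul_ite, mul_zero]
    rw [Finset.sum_comm]
    simp
  have hdf (j : Fin m) : d (f j) = a j := by simp [d, hf.eq_iff]
  have hdd : ∑ i, d i * d i = ∑ j, (a j : ℤ) ^ 2 := by simp only [hd, hdf, sq]
  simp only [lower_apply, ← hd, ← hdd, Finset.mul_sum, ← Finset.sum_sub_distrib,
    ← Finset.sum_add_distrib]
  exact Finset.sum_congr rfl fun i _ => by ring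

/-- Every entry which is at least `n` has to be lowered, so `f` differs from `f₀` by a permutation.
Both lowered sequences have the same sum of squares, hence `∑ b_{f_j} a_j` is the same for `f` and
`f₀`, and the equality case of the rearrangement inequality applies. -/
lemma eq_of_covers_lower (hn : Fintype.card ι = n) {b : ι → ℤ} {a : Fin m → ℕ}
    {f₀ f : Fin m → ι} (ha : StrictAnti a) (hb : StrictAnti (b ∘ f₀)) (hbn : ∀ j, n ≤ b (f₀ j))
    (h₀ : Covers n (lower b a f₀)) (h : Covers n (lower b a f)) : f = f₀ := by
  have hf₀ : Function.Injective f₀ := hb.injective.of_comp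
  have hhit (j : Fin m) : ∃ j', f j' = f₀ j := by
    by_contra! hj
    exact (h.lt hn (f₀ j)).not_ge (lower_apply_of_forall_ne hj ▸ hbn j)
  choose e he using hhit
  have hinj : Function.Injective e := fun i j hij => hf₀ <| by rw [← he, ← he, hij]
  set σ : Equiv.Perm (Fin m) := (Equiv.ofBijective e (Finite.injective_iff_bijective.mp hinj)).symm
  have hfσ : f = f₀ ∘ σ := by
    ext1 j
    rw [Function.comp_apply, ← he]
    exact congrArg f (σ.symm_apply_apply j).symm
  have hsq : ∑ j, b (f₀ (σ j)) * (a j : ℤ) = ∑ j, b (f₀ j) * (a j : ℤ) := by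
    have hfs := sum_lower_sq b a (hfσ ▸ hf₀.comp σ.injective : Function.Injective f)
    have hf₀s := sum_lower_sq b a hf₀
    rw [h.sum_comp hn (· ^ 2), hfσ] at hfs
    rw [h₀.sum_comp hn (· ^ 2)] at hf₀s
    simp only [Function.comp_apply] at hfs
    lia
  have hmono : Monovary (b ∘ f₀ ∘ σ) fun j => (a j : ℤ) :=
    (Monovary.sum_comp_perm_mul_eq_sum_mul_iff (hb.antitone.monovary
      fun i j hij => Nat.cast_le.mpr (ha.antitone hij))).mp hsq
  have hσ : StrictMono σ := Monotone.strictMono_of_injective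
    (fun i j hij => hij.eq_or_lt.elim (fun h => h ▸ le_rfl) fun hij =>
      hb.le_iff_ge.mp (hmono (Nat.cast_lt.mpr (ha hij)))) σ.injective
  rw [hfσ, (hσ.range_inj strictMono_id).mp (by simp [σ.surjective.range_eq]), Function.comp_id]

/-- The entries of `b` in the rows which cover `0, …, n - 1` after lowering have sum at most
`∑ v + ∑ a_j = ∑ β_i`, while the last `n` entries of `b` are its smallest ones and dominate `β`. So
all these inequalities are equalities. -/
lemma eq_natAdd_of_covers_lower {b : Fin (k + n) → ℤ} (hb : StrictAnti b) {β : Fin n → ℤ}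
    (hβ : ∀ i, β i ≤ b (Fin.natAdd k i)) {a : Fin m → ℕ} (ha : ∀ j, a j ≠ 0)
    {f₀ : Fin m → Fin n} {f : Fin m → Fin (k + n)} (h₀ : Covers n (lower β a f₀))
    (h : Covers n (lower b a f)) :
    b ∘ Fin.natAdd k = β ∧ ∃ f' : Fin m → Fin n, f = Fin.natAdd k ∘ f' ∧
      Covers n (lower β a f') := by
  obtain ⟨e, he⟩ := h.exists_orderEmbedding
  have hβe (i : Fin n) : b (Fin.natAdd k i) ≤ b (e i) :=
    hb.antitone (le_natAdd_of_strictMono e.strictMono i)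
  have hsumβ : ∑ i, β i = ∑ v ∈ Finset.range n, (v : ℤ) + ∑ j, (a j : ℤ) := by
    rw [← h₀.sum_comp (Fintype.card_fin n) (fun v => v), sum_lower]
    ring
  have hsume : ∑ i, b (e i)
      = ∑ v ∈ Finset.range n, (v : ℤ) + ∑ j, if ∃ i, f j = e i then (a j : ℤ) else 0 := by
    rw [← he.sum_comp (Fintype.card_fin n) (fun v => v)]
    simp only [Function.comp_apply, sum_lower_comp e.injective]
    ring
  have hle (j : Fin m) : (if ∃ i, f j = e i then (a j : ℤ) else 0) ≤ a j := by
    split_ifs <;> simp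
  have hsuma := Finset.sum_le_sum fun j (_ : j ∈ Finset.univ) => hle j
  have heq (i : Fin n) : β i = b (e i) :=
    (Finset.sum_eq_sum_iff_of_le fun i _ => (hβ i).trans (hβe i)).mp
      ((Finset.sum_le_sum fun i _ => (hβ i).trans (hβe i)).antisymm (by lia)) i (Finset.mem_univ i)
  have hbe (i : Fin n) : b (Fin.natAdd k i) = b (e i) :=
    (hβe i).antisymm ((heq i).symm.trans_le (hβ i))
  have hall := (Finset.sum_eq_sum_iff_of_le fun j (_ : j ∈ Finset.univ) => hle j).mp
    (by simp only [heq] at hsumβ; lia)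
  have hmem (j : Fin m) : ∃ i, f j = e i := by
    by_contra hj
    have hj0 := hall j (Finset.mem_univ j)
    rw [if_neg hj, eq_comm, Nat.cast_eq_zero] at hj0
    exact ha j hj0
  choose f' hf' using hmem
  have he_natAdd : ⇑e = Fin.natAdd k := funext fun i => (hb.injective (hbe i)).symm
  have hbβ : b ∘ Fin.natAdd k = β := funext fun i => (hbe i).trans (heq i).symm
  have hff' : f = Fin.natAdd k ∘ f' := funext fun j => (hf' j).trans (congrFun he_natAdd _)
  refine ⟨hbβ, f', hff', ?_⟩
  rwa [← hbβ, ← lower_comp_of_injective (Fin.natAdd_injective n k), ← hff', ← he_natAdd]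

end Lowering

section DerivativesOfSchur

/-- The iterated derivative `∂_{i_1} ⋯ ∂_{i_r}` of polynomials in `t`, for `L = [i_1, …, i_r]`. -/
noncomputable def pderivs (L : List ℕ) : Module.End ℂ (MvPolynomial ℕ ℂ) :=
  (L.map fun i => (pderiv i).toLinearMap).prod

lemma pderivs_cons (i : ℕ) (L : List ℕ) (p : MvPolynomial ℕ ℂ) :
    pderivs (i :: L) p = pderiv i (pderivs L p) := by
  simp [pderivs]

lemma pderivs_det_toeplitz {m l : ℕ} (a : Fin m → ℕ) (ha : ∀ j, a j ≠ 0) (b : Fin l → ℤ) :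
    pderivs (List.ofFn a) (toeplitz schurSeries b).det
      = ∑ f : Fin m → Fin l, (toeplitz schurSeries (lower b a f)).det := by
  induction m with
  | zero => simp [pderivs, lower]
  | succ m ih =>
    have hcons (f : Fin m → Fin l) :
        pderiv (a 0) (toeplitz schurSeries (lower b (Fin.tail a) f)).det
          = ∑ i, (toeplitz schurSeries (lower b a (Fin.cons i f : Fin (m + 1) → Fin l))).det := by
      rw [derivation_det_toeplitz _ (coeffwiseDerivation_pderiv_schurSeries
        (Nat.one_le_iff_ne_zero.mpr (ha 0)))]
      simp only [lower_cons]
    rw [List.ofFn_succ, pderivs_cons]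
    change pderiv (a 0) (pderivs (List.ofFn (Fin.tail a)) _) = _
    rw [ih (Fin.tail a) fun j => ha j.succ, map_sum, Finset.sum_congr rfl fun f _ => hcons f,
      Finset.sum_comm, ← Fintype.sum_prod_type',
      ← (Fin.consEquiv fun _ : Fin (m + 1) => Fin l).sum_comp]
    rfl

variable {k n : ℕ}

lemma det_toeplitz_schurSeries_of_tail_perm (ν : Fin k → ℕ) (π : Equiv.Perm (Fin n))
    {b : Fin (k + n) → ℤ}
    (hhead : ∀ i, b (Fin.castAdd n i) = (ν i + (Fin.castAdd n i).rev : ℕ))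
    (htail : ∀ i, b (Fin.natAdd k i) = ((π i).rev : ℕ)) :
    (toeplitz schurSeries b).det = (Equiv.Perm.sign π : ℤ) * schur ν := by
  set σ : Equiv.Perm (Fin (k + n)) := finSumFinEquiv.permCongr (Equiv.Perm.sumCongr 1 π)
  have hsign : Equiv.Perm.sign σ = Equiv.Perm.sign π := by
    rw [Equiv.Perm.sign_permCongr, Equiv.Perm.sign_sumCongr, map_one, one_mul]
  have hschur : schur ν = schur fun i : Fin (k + n) => pad ν i := by
    rw [schur_eq_of_forall_eq_zero (k.le_add_right n) fun i hi => dif_neg hi.not_gt]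
    simp [pad]
  rw [hschur, schur_eq_det_toeplitz, ← hsign, ← det_toeplitz_comp_perm]
  congr 2
  ext1 r
  refine Fin.addCases (fun i => ?_) (fun i => ?_) r
  · have hσ : σ (Fin.castAdd n i) = Fin.castAdd n i := by simp [σ, Equiv.permCongr_apply]
    rw [hhead, Function.comp_apply, hσ]
    simp [pad]
  · have hσ : σ (Fin.natAdd k i) = Fin.natAdd k (π i) := by simp [σ, Equiv.permCongr_apply]
    rw [htail, Function.comp_apply, hσ, Fin.val_natAdd, pad, dif_neg (by lia), zero_add,
      Fin.val_rev, Fin.val_rev, Fin.val_natAdd, add_assoc, Nat.add_sub_add_left]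

/-- In `k` variables only those terms of the derivative survive in which the last `n` rows become a
permutation of `n - 1, …, 0`. -/
lemma substPsum_pderivs_schur {m : ℕ} {ν lam : ℕ → ℕ} (hν : Antitone ν) (hle : ∀ i, lam i ≤ ν i)
    {a : Fin m → ℕ} (ha : StrictAnti a) (ha0 : ∀ j, a j ≠ 0) {f₀ : Fin m → Fin n} {β : Fin n → ℤ}
    (hβ : ∀ i, β i = (lam (k + i) + i.rev : ℕ)) (hβf : StrictAnti (β ∘ f₀))
    (hβn : ∀ j, n ≤ β (f₀ j)) (π : Equiv.Perm (Fin n))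
    (hπ : ∀ i, lower β a f₀ i = ((π i).rev : ℕ))
    [Decidable (∀ i : Fin n, ν (k + i) = lam (k + i))] :
    substPsum k (pderivs (List.ofFn a) (schur fun i : Fin (k + n) => ν i))
      = if ∀ i : Fin n, ν (k + i) = lam (k + i) then
          (Equiv.Perm.sign π : ℤ) * substPsum k (schur fun i : Fin k => ν i) else 0 := by
  set b : Fin (k + n) → ℤ := fun i => (ν i + i.rev : ℕ) with hb
  have hbtail (i : Fin n) : b (Fin.natAdd k i) = (ν (k + i) + i.rev : ℕ) := by
    simp only [hb, Fin.val_natAdd, Fin.val_rev, add_assoc k, Nat.add_sub_add_left]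
  have hbanti : StrictAnti b := fun i j hij =>
    Nat.cast_lt.mpr (add_lt_add_of_le_of_lt (hν hij.le) (Fin.rev_lt_rev.mpr hij))
  have hβb (i : Fin n) : β i ≤ b (Fin.natAdd k i) := by
    rw [hβ, hbtail, Nat.cast_le]
    exact Nat.add_le_add_right (hle _) _
  have hcond : (∀ i : Fin n, ν (k + i) = lam (k + i)) ↔ b ∘ Fin.natAdd k = β := by
    simp [funext_iff, hbtail, hβ]
  have hcov₀ : Covers n (lower β a f₀) := fun v hv =>
    ⟨π.symm (Fin.rev ⟨v, hv⟩), by simp [hπ]⟩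
  have hunique (f : Fin m → Fin (k + n))
      (hf : substPsum k (toeplitz schurSeries (lower b a f)).det ≠ 0) :
      b ∘ Fin.natAdd k = β ∧ f = Fin.natAdd k ∘ f₀ := by
    rw [substPsum_det_toeplitz] at hf
    have hcov : Covers n (lower b a f) := fun v hv => exists_eq_of_det_toeplitz_ne_zero
      ((natDegree_prodOneSub_le _ _).trans (Finset.card_fin k).le)
      (prodOneSub_univ_mul_homogSeries k) hf (by lia)
    obtain ⟨hbβ, f', rfl, hcov'⟩ := eq_natAdd_of_covers_lower hbanti hβb ha0 hcov₀ hcov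
    exact ⟨hbβ, congrArg _ (eq_of_covers_lower (Fintype.card_fin n) ha hβf hβn hcov₀ hcov')⟩
  rw [schur_eq_det_toeplitz, pderivs_det_toeplitz a ha0, map_sum]
  split_ifs with htail
  · rw [Finset.sum_eq_single (Fin.natAdd k ∘ f₀)
      (fun f _ hf => by_contra fun h => hf (hunique f h).2) (by simp),
      det_toeplitz_schurSeries_of_tail_perm (fun i : Fin k => ν i) π, map_mul, map_intCast]
    · exact fun i => lower_apply_of_forall_ne fun j h => by
        have hval := congrArg Fin.val h
        simp only [Function.comp_apply, Fin.val_natAdd, Fin.val_castAdd] at hval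
        lia
    · intro i
      rw [← hπ, ← hcond.mp htail, ← lower_comp_of_injective (Fin.natAdd_injective n k)]
      rfl
  · exact Finset.sum_eq_zero fun f _ => by_contra fun h => htail (hcond.mpr (hunique f h).1)

end DerivativesOfSchur

section Evaluation

variable (k : ℕ) (L : List ℕ) (γ : Fin k →₀ ℕ)

lemma psumC_isHomogeneous (n : ℕ) : (psumC k n).IsHomogeneous n := by
  rw [psumC, ← C_mul']
  exact IsHomogeneous.C_mul (IsHomogeneous.sum _ _ _ fun i _ => isHomogeneous_X_pow i n) _

variable {k} in
lemma evalPS_congr {F F' : (ℕ →₀ ℕ) → ℂ}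
    (h : ∀ β, Finsupp.weight (id : ℕ → ℕ) β = γ.degree → F β = F' β) :
    evalPS k F γ = evalPS k F' γ := by
  refine finsum_congr fun β => ?_
  by_cases hβ : Finsupp.weight (id : ℕ → ℕ) β = γ.degree
  · rw [h β hβ]
  · have hprod := IsHomogeneous.prod β.support (fun n => psumC k n ^ β n) (fun n => n * β n)
      fun n _ => (psumC_isHomogeneous k n).pow (β n)
    rw [hprod.coeff_eq_zero, mul_zero, mul_zero]
    simpa [Finsupp.weight_apply, Finsupp.sum, mul_comm] using Ne.symm hβ

lemma derivsCoeff_congr {F F' : (ℕ →₀ ℕ) → ℂ} {N : ℕ}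
    (h : ∀ β, Finsupp.weight (id : ℕ → ℕ) β = N + L.sum → F β = F' β) {β : ℕ →₀ ℕ}
    (hβ : Finsupp.weight (id : ℕ → ℕ) β = N) :
    derivsCoeff L F β = derivsCoeff L F' β := by
  induction L generalizing N β with
  | nil => exact h β (by simpa using hβ)
  | cons i L ih =>
    refine congrArg (((β i : ℕ) + 1 : ℂ) * ·) (ih (N := N + i) (fun β' h' => h β' ?_) ?_)
    · rw [h', List.sum_cons, add_assoc]
    · rw [map_add, hβ, Finsupp.weight_single, id, one_smul]

variable {k} in
lemma evalPS_derivsCoeff_congr {F F' : (ℕ →₀ ℕ) → ℂ}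
    (h : ∀ β, Finsupp.weight (id : ℕ → ℕ) β = γ.degree + L.sum → F β = F' β) :
    evalPS k (derivsCoeff L F) γ = evalPS k (derivsCoeff L F') γ :=
  evalPS_congr γ fun _ hβ => derivsCoeff_congr L h hβ

lemma derivsCoeff_coeff (Q : MvPolynomial ℕ ℂ) :
    derivsCoeff L (fun β => coeff β Q) = fun β => coeff β (pderivs L Q) := by
  induction L with
  | nil => rfl
  | cons i L ih =>
    ext1 β
    change ((β i : ℕ) + 1 : ℂ) * derivsCoeff L (fun β => coeff β Q) (β + Finsupp.single i 1) = _
    rw [ih, pderivs_cons, coeff_pderiv, mul_comm]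

variable {k}

lemma evalPS_coeff (Q : MvPolynomial ℕ ℂ) :
    evalPS k (fun β => coeff β Q) γ = coeff γ (substPsum k Q) := by
  rw [substPsum, aeval_def, eval₂_eq, coeff_sum, evalPS,
    finsum_eq_sum_of_support_subset (s := Q.support)]
  · simp only [algebraMap_eq, coeff_C_mul]
  · exact fun β hβ => mem_support_iff.mpr (left_ne_zero_of_mul hβ)

lemma evalPS_derivsCoeff_coeff (Q : MvPolynomial ℕ ℂ) :
    evalPS k (derivsCoeff L fun β => coeff β Q) γ = coeff γ (substPsum k (pderivs L Q)) := by
  rw [derivsCoeff_coeff, evalPS_coeff]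

lemma coeff_substPsum_pderivs_of_ne {Q : MvPolynomial ℕ ℂ} {d : ℕ}
    (hQ : IsWeightedHomogeneous (id : ℕ → ℕ) Q d) (hd : d ≠ γ.degree + L.sum) :
    coeff γ (substPsum k (pderivs L Q)) = 0 := by
  rw [← evalPS_derivsCoeff_coeff,
    evalPS_derivsCoeff_congr L γ (F' := fun β => coeff β 0) fun β hβ =>
      hQ.coeff_eq_zero β fun h => hd (h.symm.trans hβ),
    evalPS_derivsCoeff_coeff, map_zero, map_zero, coeff_zero]

/-- Weighted homogeneity makes a locally finite sum behave like a finite one in each degree. -/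
lemma evalPS_derivsCoeff_add_finsum {ι : Type*} (P₀ : MvPolynomial ℕ ℂ) (s : Set ι) (ξ : ι → ℂ)
    {P : ι → MvPolynomial ℕ ℂ} {d : ι → ℕ}
    (hd : ∀ μ, IsWeightedHomogeneous (id : ℕ → ℕ) (P μ) (d μ))
    (hfin : ∀ N, {μ ∈ s | d μ = N}.Finite) :
    evalPS k (derivsCoeff L fun β => coeff β P₀ + ∑ᶠ μ ∈ s, ξ μ * coeff β (P μ)) γ
      = coeff γ (substPsum k (pderivs L P₀))
        + ∑ᶠ μ ∈ s, ξ μ * coeff γ (substPsum k (pderivs L (P μ))) := by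
  set T := (hfin (γ.degree + L.sum)).toFinset
  have hsum (f : ι → ℂ) (hf : ∀ μ, d μ ≠ γ.degree + L.sum → f μ = 0) :
      ∑ᶠ μ ∈ s, ξ μ * f μ = ∑ μ ∈ T, ξ μ * f μ := by
    refine finsum_mem_eq_sum_of_subset _ ?_ fun μ hμ => ((hfin _).mem_toFinset.mp hμ).1
    rintro μ ⟨hμ, hne⟩
    exact (hfin _).mem_toFinset.mpr ⟨hμ, by_contra fun h => hne (by simp [hf μ h])⟩
  have hseries : ∀ β, Finsupp.weight (id : ℕ → ℕ) β = γ.degree + L.sum →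
      coeff β P₀ + ∑ᶠ μ ∈ s, ξ μ * coeff β (P μ) = coeff β (P₀ + ∑ μ ∈ T, ξ μ • P μ) := by
    intro β hβ
    rw [hsum _ fun μ hμ => (hd μ).coeff_eq_zero β (hβ.trans_ne hμ.symm)]
    simp only [coeff_add, coeff_sum, coeff_smul, smul_eq_mul]
  rw [evalPS_derivsCoeff_congr L γ hseries, evalPS_derivsCoeff_coeff,
    hsum _ fun μ hμ => coeff_substPsum_pderivs_of_ne L γ (hd μ) hμ]
  simp only [map_add, map_sum, map_smul, coeff_add, coeff_sum, coeff_smul, smul_eq_mul]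

end Evaluation

section Grading

lemma pS_isWeightedHomogeneous (n : ℕ) : IsWeightedHomogeneous (id : ℕ → ℕ) (pS n) n := by
  refine IsWeightedHomogeneous.sum _ _ _ fun m _ => ?_
  rw [← C_mul']
  refine IsWeightedHomogeneous.C_mul (IsWeightedHomogeneous.sum _ _ _ fun c hc => ?_) _
  have hprod := IsWeightedHomogeneous.prod Finset.univ
    (fun j => (X (c j : ℕ) : MvPolynomial ℕ ℂ)) (fun j => (c j : ℕ))
    fun j _ => isWeightedHomogeneous_X ℂ (id : ℕ → ℕ) _
  rwa [(Finset.mem_filter.mp hc).2.1] at hprod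

lemma schur_isWeightedHomogeneous {l : ℕ} (lam : Fin l → ℕ) :
    IsWeightedHomogeneous (id : ℕ → ℕ) (schur lam) (∑ i, lam i) := by
  rw [schur, Matrix.det_apply]
  refine IsWeightedHomogeneous.sum _ _ _ fun σ _ => ?_
  have hprod : IsWeightedHomogeneous (id : ℕ → ℕ)
      (∏ i, pz ((lam (σ i) : ℤ) - (σ i : ℕ) + (i : ℕ))) (∑ i, lam i) := by
    by_cases h : ∀ i, 0 ≤ (lam (σ i) : ℤ) - (σ i : ℕ) + (i : ℕ)
    · have hdeg : ∑ i, lam i = ∑ i, ((lam (σ i) : ℤ) - (σ i : ℕ) + (i : ℕ)).toNat := by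
        zify
        rw [Finset.sum_congr rfl fun i _ => Int.toNat_of_nonneg (h i), Finset.sum_add_distrib,
          Finset.sum_sub_distrib, Equiv.sum_comp σ fun i => (lam i : ℤ),
          Equiv.sum_comp σ fun i => ((i : ℕ) : ℤ), sub_add_cancel]
      rw [hdeg]
      refine IsWeightedHomogeneous.prod _ _ _ fun i _ => ?_
      rw [pz, if_pos (h i)]
      exact pS_isWeightedHomogeneous _
    · push Not at h
      obtain ⟨i, hi⟩ := h
      rw [Finset.prod_eq_zero (Finset.mem_univ i) (if_neg hi.not_ge)]
      exact isWeightedHomogeneous_zero _ _ _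
  rcases Int.units_eq_one_or (Equiv.Perm.sign σ) with h | h <;> rw [h]
  · simpa using hprod
  · simpa using hprod.neg

lemma Ptn.toFun_eq_zero_of_len_le (μ : Ptn) {i : ℕ} (h : μ.len ≤ i) : μ.toFun i = 0 :=
  Nat.eq_zero_of_le_zero ((μ.anti _ _ h).trans (Nat.find_spec μ.bdd).le)

lemma Ptn.schurP_eq (μ : Ptn) {n : ℕ} (h : μ.len ≤ n) :
    μ.schurP = schur fun i : Fin n => μ.toFun i :=
  (schur_eq_of_forall_eq_zero h fun _ hi => μ.toFun_eq_zero_of_len_le hi).symm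

lemma Ptn.len_le_sum (μ : Ptn) : μ.len ≤ ∑ i : Fin μ.len, μ.toFun i := by
  calc μ.len = ∑ _i : Fin μ.len, 1 := by simp
    _ ≤ ∑ i : Fin μ.len, μ.toFun i := Finset.sum_le_sum fun i _ =>
      Nat.one_le_iff_ne_zero.mpr (Nat.find_min μ.bdd i.isLt)

lemma Ptn.finite_of_le (M N : ℕ) : {μ : Ptn | (∀ i, μ.toFun i ≤ N) ∧ μ.toFun M = 0}.Finite := by
  refine Set.Finite.of_injOn (f := fun μ (i : Fin M) => μ.toFun i)
    (t := Set.Iic fun _ : Fin M => N) (fun μ hμ (i : Fin M) => hμ.1 i) ?_ (Set.finite_Iic _)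
  rintro ⟨μ, hμ, _⟩ ⟨-, hμM⟩ ⟨ν, hν, _⟩ ⟨-, hνM⟩ h
  simp only [mk.injEq]
  ext1 i
  rcases lt_or_ge i M with hi | hi
  · exact congrFun h ⟨i, hi⟩
  · exact (Nat.eq_zero_of_le_zero (hμM ▸ hμ M i hi)).trans
      (Nat.eq_zero_of_le_zero (hνM ▸ hν M i hi)).symm

lemma Ptn.finite_sum_eq (N : ℕ) : {μ : Ptn | ∑ i : Fin μ.len, μ.toFun i = N}.Finite := by
  refine (Ptn.finite_of_le N N).subset ?_
  rintro μ rfl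
  refine ⟨fun i => ?_, μ.toFun_eq_zero_of_len_le μ.len_le_sum⟩
  rcases lt_or_ge i μ.len with hi | hi
  · exact Finset.single_le_sum (f := fun i : Fin μ.len => μ.toFun i) (fun _ _ => Nat.zero_le _)
      (Finset.mem_univ ⟨i, hi⟩)
  · exact (μ.toFun_eq_zero_of_len_le hi).trans_le (Nat.zero_le _)

lemma Ptn.finite_sum_head_eq {k M : ℕ} {tail : ℕ → ℕ} (htail : tail M = 0) (hM : k ≤ M) (N : ℕ) :
    {μ : Ptn | (∀ i, k ≤ i → μ.toFun i = tail i) ∧ ∑ i : Fin k, μ.toFun i = N}.Finite := by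
  refine (Ptn.finite_of_le M (N + tail k)).subset ?_
  rintro μ ⟨hμ, rfl⟩
  refine ⟨fun i => ?_, (hμ M hM).trans htail⟩
  rcases lt_or_ge i k with hi | hi
  · exact (Finset.single_le_sum (f := fun i : Fin k => μ.toFun i) (fun _ _ => Nat.zero_le _)
      (Finset.mem_univ ⟨i, hi⟩)).trans (Nat.le_add_right _ _)
  · exact ((μ.anti k i hi).trans (hμ k le_rfl).le).trans (Nat.le_add_left _ _)

lemma pad_eq_zero_of_le {l : ℕ} (lam : Fin l → ℕ) {i : ℕ} (h : l ≤ i) : pad lam i = 0 :=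
  dif_neg h.not_gt

variable {l : ℕ} (lam : Fin l → ℕ) (ξ : Ptn → ℂ) {n : ℕ} (γ : Fin n →₀ ℕ)

lemma evalPS_derivsCoeff_tauCoeff (L : List ℕ) :
    evalPS n (derivsCoeff L (tauCoeff lam ξ)) γ
      = coeff γ (substPsum n (pderivs L (schur lam)))
        + ∑ᶠ (μ : Ptn) (_ : PtnGt lam μ), ξ μ * coeff γ (substPsum n (pderivs L μ.schurP)) :=
  evalPS_derivsCoeff_add_finsum L γ _ {μ | PtnGt lam μ} ξ
    (fun _ => schur_isWeightedHomogeneous _)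
    fun N => (Ptn.finite_sum_eq N).subset fun _ h => h.2

lemma evalPS_tauKCoeff {k : ℕ} (hk : k ≤ l) :
    evalPS n (tauKCoeff lam ξ k) γ
      = coeff γ (substPsum n (schur fun i : Fin k => pad lam i))
        + ∑ᶠ (μ : Ptn) (_ : PtnGt lam μ ∧ ∀ i, k ≤ i → μ.toFun i = pad lam i),
          ξ μ * coeff γ (substPsum n (schur fun i : Fin k => μ.toFun i)) :=
  evalPS_derivsCoeff_add_finsum [] γ _
    {μ | PtnGt lam μ ∧ ∀ i, k ≤ i → μ.toFun i = pad lam i} ξ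
    (fun _ => schur_isWeightedHomogeneous _)
    fun N => (Ptn.finite_sum_head_eq (pad_eq_zero_of_le lam le_rfl) hk N).subset
      fun _ h => ⟨h.1.2, h.2⟩

end Grading

section LastVariable

variable {n : ℕ}

lemma killCompl_X_castSucc (i : Fin n) :
    killCompl (R := ℂ) (Fin.castSucc_injective n) (X i.castSucc) = X i := by
  rw [← rename_X, killCompl_rename_app]

lemma killCompl_substPsum (p : MvPolynomial ℕ ℂ) :
    killCompl (Fin.castSucc_injective n) (substPsum (n + 1) p) = substPsum n p := by
  have hlast : killCompl (R := ℂ) (Fin.castSucc_injective n) (X (Fin.last n)) = 0 := by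
    rw [killCompl, aeval_X, dif_neg]
    rintro ⟨i, hi⟩
    exact Fin.castSucc_ne_last i hi
  suffices h : (killCompl (Fin.castSucc_injective n)).comp (substPsum (n + 1)) = substPsum n from
    DFunLike.congr_fun h p
  ext1 i
  simp only [AlgHom.comp_apply, substPsum, aeval_X, psumC, map_smul, Fin.sum_univ_castSucc]
  rcases eq_or_ne i 0 with rfl | hi
  · simp
  · simp only [map_add, map_sum, map_pow, hlast, zero_pow hi, add_zero, killCompl_X_castSucc]

variable {ν : ℕ → ℕ} (hν : Antitone ν)
include hν

lemma substPsum_schur_eq_prod_pow_mul {l N : ℕ} (h : l ≤ N + 1) :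
    substPsum l (schur fun i : Fin l => ν i)
      = (∏ i, X i) ^ ν N * substPsum l (schur fun i : Fin l => ν i - ν N) := by
  rw [← substPsum_schur_add]
  congr 2
  ext1 i
  exact (Nat.sub_add_cancel (hν (by have := i.isLt; lia))).symm

lemma substPsum_schur_eq_X_last_pow_mul :
    substPsum (n + 1) (schur fun i : Fin (n + 1) => ν i)
      = X (Fin.last n) ^ ν n * ((∏ i : Fin n, X i.castSucc) ^ ν n
        * substPsum (n + 1) (schur fun i : Fin n => ν i - ν n)) := by
  rw [substPsum_schur_eq_prod_pow_mul hν le_rfl, Fin.prod_univ_castSucc, mul_pow,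
    schur_succ_of_eq_zero (ν := fun i => ν i - ν n) (Nat.sub_self _)]
  ring

lemma coeff_substPsum_schur_of_lt {γ : Fin (n + 1) →₀ ℕ} (hγ : γ (Fin.last n) < ν n) :
    coeff γ (substPsum (n + 1) (schur fun i : Fin (n + 1) => ν i)) = 0 := by
  rw [substPsum_schur_eq_X_last_pow_mul hν, X_pow_eq_monomial, coeff_monomial_mul', if_neg]
  intro h
  exact hγ.not_ge (by simpa using h (Fin.last n))

lemma coeff_substPsum_schur_last (δ : Fin n →₀ ℕ) :
    coeff (δ.mapDomain Fin.castSucc + Finsupp.single (Fin.last n) (ν n))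
        (substPsum (n + 1) (schur fun i : Fin (n + 1) => ν i))
      = coeff δ (substPsum n (schur fun i : Fin n => ν i)) := by
  rw [substPsum_schur_eq_X_last_pow_mul hν, X_pow_eq_monomial, add_comm (δ.mapDomain _),
    coeff_monomial_mul, one_mul, ← coeff_killCompl (Fin.castSucc_injective n), map_mul,
    killCompl_substPsum, substPsum_schur_eq_prod_pow_mul hν n.le_succ, map_pow, map_prod]
  simp only [killCompl_X_castSucc]

end LastVariable

section TauLastVariable

variable {l : ℕ} {lam : Fin l → ℕ} (hlam : Antitone (pad lam)) (ξ : Ptn → ℂ) {n : ℕ}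
  (hn : n + 1 ≤ l)
include hlam hn

theorem evalPS_tauKCoeff_of_lt {γ : Fin (n + 1) →₀ ℕ} (hγ : γ (Fin.last n) < pad lam n) :
    evalPS (n + 1) (tauKCoeff lam ξ (n + 1)) γ = 0 := by
  rw [evalPS_tauKCoeff lam ξ γ hn, coeff_substPsum_schur_of_lt hlam hγ, zero_add]
  refine finsum_mem_eq_zero_of_forall_eq_zero
    (s := {μ | PtnGt lam μ ∧ ∀ i, n + 1 ≤ i → μ.toFun i = pad lam i}) fun μ hμ => ?_
  rw [coeff_substPsum_schur_of_lt μ.anti (hγ.trans_le (hμ.1.1 n)), mul_zero]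

theorem evalPS_tauKCoeff_last (δ : Fin n →₀ ℕ) :
    evalPS (n + 1) (tauKCoeff lam ξ (n + 1))
        (δ.mapDomain Fin.castSucc + Finsupp.single (Fin.last n) (pad lam n))
      = evalPS n (tauKCoeff lam ξ n) δ := by
  classical
  have hindex (μ : Ptn) : (PtnGt lam μ ∧ ∀ i, n ≤ i → μ.toFun i = pad lam i)
      ↔ (PtnGt lam μ ∧ ∀ i, n + 1 ≤ i → μ.toFun i = pad lam i) ∧ μ.toFun n = pad lam n := by
    rw [and_assoc, and_congr_right_iff]
    exact fun _ => ⟨fun h => ⟨fun i hi => h i (n.le_succ.trans hi), h n le_rfl⟩,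
      fun h i hi => hi.eq_or_lt.elim (fun hi => hi ▸ h.2) (h.1 i)⟩
  have hval : (δ.mapDomain Fin.castSucc + Finsupp.single (Fin.last n) (pad lam n)) (Fin.last n)
      = pad lam n := by
    rw [Finsupp.add_apply, Finsupp.mapDomain_of_notMem_range, Finsupp.single_eq_same, zero_add]
    rintro ⟨i, hi⟩
    exact Fin.castSucc_ne_last i hi
  rw [evalPS_tauKCoeff lam ξ _ hn, evalPS_tauKCoeff lam ξ _ (n.le_succ.trans hn),
    coeff_substPsum_schur_last hlam]
  congr 1
  refine finsum_congr fun μ => ?_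
  rw [finsum_eq_if, finsum_eq_if, if_congr (hindex μ) rfl rfl]
  split_ifs with hμ h h
  · rw [← h.2, coeff_substPsum_schur_last μ.anti]
  · have hlt : pad lam n < μ.toFun n := (hμ.1.1 n).lt_of_ne fun hn => h ⟨hμ, hn.symm⟩
    rw [coeff_substPsum_schur_of_lt μ.anti (hval.trans_lt hlt), mul_zero]
  · exact absurd h.1 hμ
  · rfl

end TauLastVariable

section GapSequence

variable {G : Finset ℕ}

lemma finite_ofPred_mem (G : Finset ℕ) : (Set.ofPred (· ∈ G)).Finite := G.finite_toSet

lemma card_toFinset_ofPred_mem (G : Finset ℕ) : (finite_ofPred_mem G).toFinset.card = G.card := by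
  congr 1
  ext x
  simp

lemma wseq_eq_nth (G : Finset ℕ) (i : ℕ) : wseq G i = Nat.nth (· ∈ G) i := by
  rw [Nat.nth_eq_getD_sort (finite_ofPred_mem G), wseq]
  congr
  ext x
  simp

lemma wseq_lt_wseq {i j : ℕ} (hij : i < j) (hj : j < G.card) : wseq G i < wseq G j := by
  rw [wseq_eq_nth, wseq_eq_nth]
  exact Nat.nth_lt_nth_of_lt_card (finite_ofPred_mem G) hij (by rwa [card_toFinset_ofPred_mem])

lemma wseq_add_le {i e : ℕ} (h : i + e < G.card) : wseq G i + e ≤ wseq G (i + e) := by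
  induction e with
  | zero => rfl
  | succ e ih =>
    exact (Nat.succ_le_succ (ih (by lia))).trans (wseq_lt_wseq (Nat.lt_succ_self _) h)

lemma le_wseq {i : ℕ} (hi : i < G.card) : i ≤ wseq G i := by
  have h := wseq_add_le (G := G) (i := 0) (e := i) (by lia)
  rw [zero_add] at h
  exact (Nat.le_add_left _ _).trans h

lemma wstar_strictMono (G : Finset ℕ) : StrictMono (wstar G) :=
  Nat.nth_strictMono G.finite_toSet.infinite_compl

variable {g k : ℕ}

lemma count_mem_add_gapm (G : Finset ℕ) (g k : ℕ) :
    Nat.count (· ∈ G) (g - k) + gapm G g k = g - k := by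
  rw [Nat.count_eq_card_filter_range, gapm, Finset.card_filter_add_card_filter_not,
    Finset.card_range]

lemma gapm_le (G : Finset ℕ) (g k : ℕ) : gapm G g k ≤ g - k :=
  (Nat.le_add_left _ _).trans (count_mem_add_gapm G g k).le

lemma wstar_lt {j : ℕ} (hj : j < gapm G g k) : wstar G j < g - k := by
  refine Nat.nth_lt_of_lt_count ?_
  rwa [Nat.count_eq_card_filter_range]

lemma wseq_lt {i : ℕ} (hi : i < g - k - gapm G g k) : wseq G i < g - k := by
  rw [wseq_eq_nth]
  have := count_mem_add_gapm G g k
  exact Nat.nth_lt_of_lt_count (by lia)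

lemma le_wseq_of_sub_gapm_le {i : ℕ} (hi : g - k - gapm G g k ≤ i) (hiG : i < G.card) :
    g - k ≤ wseq G i := by
  by_contra! h
  rw [← card_toFinset_ofPred_mem] at hiG
  rw [wseq_eq_nth] at h
  have hcount := Nat.count_strict_mono (Nat.nth_mem_of_lt_card _ hiG) h
  rw [Nat.count_nth_of_lt_card_finite _ hiG] at hcount
  have := count_mem_add_gapm G g k
  lia

lemma pad_gapPart_of_lt {a : ℕ} (ha : a < g) :
    pad (fun a : Fin g => gapPart G g a) a = gapPart G g a :=
  dif_pos ha

lemma pad_gapPart_antitone (G : Finset ℕ) :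
    Antitone (pad fun a : Fin G.card => gapPart G G.card a) := by
  intro i j hij
  rcases lt_or_ge j G.card with hj | hj
  · rw [pad_gapPart_of_lt hj, pad_gapPart_of_lt (hij.trans_lt hj), gapPart, gapPart]
    have hadd := wseq_add_le (G := G) (i := G.card - 1 - j) (e := j - i) (by lia)
    rw [show G.card - 1 - j + (j - i) = G.card - 1 - i by lia] at hadd
    lia
  · rw [pad_eq_zero_of_le _ hj]
    exact Nat.zero_le _

end GapSequence

section GapDerivatives

variable {G : Finset ℕ} {k r : ℕ}

lemma card_sub_le_wseq {j : ℕ} (hj : j < gapm G G.card k) :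
    G.card - k ≤ wseq G (G.card - k - j - 1) := by
  have := gapm_le G G.card k
  exact le_wseq_of_sub_gapm_le (by lia) (by lia)

lemma wstar_lt_wseq {j : ℕ} (hj : j < gapm G G.card k) :
    wstar G j < wseq G (G.card - k - j - 1) :=
  (wstar_lt hj).trans_le (card_sub_le_wseq hj)

lemma gapa_ne_zero {j : ℕ} (hj : j < gapm G G.card k) : gapa G G.card k j ≠ 0 :=
  (Nat.sub_pos_of_lt (wstar_lt_wseq hj)).ne'

lemma gapa_lt_gapa {i j : ℕ} (hij : i < j) (hj : j < gapm G G.card k) :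
    gapa G G.card k j < gapa G G.card k i := by
  have hm := gapm_le G G.card k
  have hw : wseq G (G.card - k - j - 1) < wseq G (G.card - k - i - 1) :=
    wseq_lt_wseq (by lia) (by lia)
  have hstar := wstar_strictMono G hij
  have hlt := wstar_lt_wseq hj
  rw [gapa, gapa]
  lia

lemma map_gapa_range (G : Finset ℕ) (g k : ℕ) :
    (List.range (gapm G g k)).map (gapa G g k)
      = List.ofFn fun j : Fin (gapm G g k) => gapa G g k j := by
  rw [List.ofFn_eq_map, ← List.map_coe_finRange_eq_range, List.map_map]
  rfl

/-- The `i`-th entry of the tuple `(w_1^*, …, w_m^*, w_{g-k-m}, …, w_1)` with `m = m_k`, which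
is a permutation of `0, …, g - k - 1`. -/
noncomputable def gapTuple (G : Finset ℕ) (g k i : ℕ) : ℕ :=
  if i < gapm G g k then wstar G i else wseq G (g - k - i - 1)

lemma gapTuple_lt {g i : ℕ} (hi : i < g - k) : gapTuple G g k i < g - k := by
  rw [gapTuple]
  split_ifs with him
  · exact wstar_lt him
  · exact wseq_lt (by lia)

/-- The entries `w_{g-k}, …, w_1`, shifted by `r`, followed by `r - 1, …, 0`: the numbers
`λ_{k+i} + (n - i)` for the tail `(λ_{k+1}, …, λ_g)` of the partition of `G` padded by `r` zeros to
length `n`. -/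
def tailBeta (G : Finset ℕ) (k r : ℕ) (i : Fin (G.card - k + r)) : ℤ :=
  (pad (fun a : Fin G.card => gapPart G G.card a) (k + i) + i.rev : ℕ)

lemma tailBeta_castAdd (i : Fin (G.card - k)) :
    tailBeta G k r (i.castAdd r) = (wseq G (G.card - k - i - 1) + r : ℕ) := by
  have hi := i.isLt
  have hle := le_wseq (G := G) (i := G.card - k - i - 1) (by lia)
  rw [tailBeta, Fin.val_castAdd, pad_gapPart_of_lt (by lia), gapPart, Fin.val_rev,
    Fin.val_castAdd, show G.card - 1 - (k + i) = G.card - k - i - 1 by lia]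
  lia

lemma tailBeta_natAdd (i : Fin r) :
    tailBeta G k r (i.natAdd (G.card - k)) = (i.rev : ℕ) := by
  rw [tailBeta, Fin.val_natAdd, pad_eq_zero_of_le _ (by lia), Fin.val_rev, Fin.val_rev,
    Fin.val_natAdd]
  lia

/-- The derivative `∂_{a_j}` lowers the `j`-th row. -/
def derivRow (G : Finset ℕ) (k r : ℕ) (j : Fin (gapm G G.card k)) : Fin (G.card - k + r) :=
  (j.castLE (gapm_le _ _ _)).castAdd r

lemma derivRow_injective : Function.Injective (derivRow G k r) :=
  (Fin.castAdd_injective _ r).comp (Fin.castLE_injective _)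

lemma tailBeta_derivRow (j : Fin (gapm G G.card k)) :
    tailBeta G k r (derivRow G k r j) = (wseq G (G.card - k - j - 1) + r : ℕ) :=
  tailBeta_castAdd _

lemma strictAnti_tailBeta_derivRow : StrictAnti (tailBeta G k r ∘ derivRow G k r) := by
  intro i j hij
  have hm := gapm_le G G.card k
  simp only [Function.comp_apply, tailBeta_derivRow, Nat.cast_lt, add_lt_add_iff_right]
  exact wseq_lt_wseq (by lia) (by lia)

lemma lower_tailBeta_castAdd (i : Fin (G.card - k)) :
    lower (tailBeta G k r) (fun j => gapa G G.card k j) (derivRow G k r) (i.castAdd r)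
      = (gapTuple G G.card k i + r : ℕ) := by
  by_cases hi : (i : ℕ) < gapm G G.card k
  · have hlt := wstar_lt_wseq hi
    rw [show i.castAdd r = derivRow G k r ⟨i, hi⟩ from rfl, lower_apply_self derivRow_injective,
      tailBeta_derivRow, gapTuple, if_pos hi, gapa]
    lia
  · rw [lower_apply_of_forall_ne, tailBeta_castAdd, gapTuple, if_neg hi]
    intro j h
    have hval := congrArg Fin.val h
    exact hi (hval ▸ j.isLt)

lemma lower_tailBeta_natAdd (i : Fin r) :
    lower (tailBeta G k r) (fun j => gapa G G.card k j) (derivRow G k r)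
      (i.natAdd (G.card - k)) = (i.rev : ℕ) := by
  rw [lower_apply_of_forall_ne, tailBeta_natAdd]
  intro j h
  have hval := congrArg Fin.val h
  have hj := j.isLt.trans_le (gapm_le _ _ _)
  simp only [derivRow, Fin.val_castAdd, Fin.val_castLE, Fin.val_natAdd] at hval
  lia

variable {π : Equiv.Perm (Fin (G.card - k))}
  (hπ : ∀ j, (π j : ℕ) = G.card - k - 1 - gapTuple G G.card k j)
include hπ

lemma lower_tailBeta (i : Fin (G.card - k + r)) :
    lower (tailBeta G k r) (fun j => gapa G G.card k j) (derivRow G k r) i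
      = ((finSumFinEquiv.permCongr (π.sumCongr (1 : Equiv.Perm (Fin r))) i).rev : ℕ) := by
  refine Fin.addCases (fun i => ?_) (fun i => ?_) i
  · have hlt := gapTuple_lt (G := G) i.isLt
    have hperm : finSumFinEquiv.permCongr (π.sumCongr (1 : Equiv.Perm (Fin r))) (i.castAdd r)
        = (π i).castAdd r := by simp [Equiv.permCongr_apply]
    rw [lower_tailBeta_castAdd, hperm, Fin.val_rev, Fin.val_castAdd, hπ]
    lia
  · have hperm : finSumFinEquiv.permCongr (π.sumCongr (1 : Equiv.Perm (Fin r)))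
        (i.natAdd (G.card - k)) = i.natAdd (G.card - k) := by simp [Equiv.permCongr_apply]
    rw [lower_tailBeta_natAdd, hperm, Fin.val_rev, Fin.val_rev, Fin.val_natAdd]
    lia

open scoped Classical in
lemma substPsum_pderivs_gapa {ν : ℕ → ℕ} (hν : Antitone ν)
    (hle : ∀ i, pad (fun a : Fin G.card => gapPart G G.card a) i ≤ ν i)
    (hr : ∀ i, G.card + r ≤ i → ν i = 0) :
    substPsum k (pderivs ((List.range (gapm G G.card k)).map (gapa G G.card k))
        (schur fun i : Fin (k + (G.card - k + r)) => ν i))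
      = if ∀ i, k ≤ i → ν i = pad (fun a : Fin G.card => gapPart G G.card a) i then
          (Equiv.Perm.sign π : ℤ) * substPsum k (schur fun i : Fin k => ν i) else 0 := by
  have htail : (∀ i : Fin (G.card - k + r),
        ν (k + i) = pad (fun a : Fin G.card => gapPart G G.card a) (k + i))
      ↔ ∀ i, k ≤ i → ν i = pad (fun a : Fin G.card => gapPart G G.card a) i := by
    refine ⟨fun h i hi => ?_, fun h i => h _ (Nat.le_add_right k i)⟩
    rcases lt_or_ge i (G.card + r) with hir | hir
    · simpa only [Nat.add_sub_cancel' hi] using h ⟨i - k, by lia⟩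
    · rw [hr i hir, pad_eq_zero_of_le _ (by lia)]
  have hle_tailBeta (j : Fin (gapm G G.card k)) :
      (G.card - k + r : ℕ) ≤ tailBeta G k r (derivRow G k r j) := by
    rw [tailBeta_derivRow, Nat.cast_le]
    exact Nat.add_le_add_right (card_sub_le_wseq j.isLt) r
  rw [map_gapa_range, substPsum_pderivs_schur hν hle (fun i j hij => gapa_lt_gapa hij j.isLt)
    (fun j => gapa_ne_zero j.isLt) (fun _ => rfl) strictAnti_tailBeta_derivRow hle_tailBeta
    _ (lower_tailBeta hπ), Equiv.Perm.sign_permCongr, Equiv.Perm.sign_sumCongr, map_one,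
    mul_one, if_congr htail rfl rfl]

theorem evalPS_derivsCoeff_gapa (hk : k ≤ G.card) (ξ : Ptn → ℂ) (γ : Fin k →₀ ℕ) :
    evalPS k (derivsCoeff ((List.range (gapm G G.card k)).map (gapa G G.card k))
        (tauCoeff (fun a : Fin G.card => gapPart G G.card a) ξ)) γ
      = ((Equiv.Perm.sign π : ℤ) : ℂ)
          * evalPS k (tauKCoeff (fun a : Fin G.card => gapPart G G.card a) ξ k) γ := by
  classical
  have hsign (Q : MvPolynomial (Fin k) ℂ) :
      coeff γ (((Equiv.Perm.sign π : ℤ) : MvPolynomial (Fin k) ℂ) * Q)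
        = ((Equiv.Perm.sign π : ℤ) : ℂ) * coeff γ Q := by
    rw [← map_intCast (C : ℂ →+* MvPolynomial (Fin k) ℂ), coeff_C_mul]
  rw [evalPS_derivsCoeff_tauCoeff, evalPS_tauKCoeff _ ξ γ hk, mul_add,
    ← smul_eq_mul (b := finsum _), smul_finsum]
  congr 1
  · have h := substPsum_pderivs_gapa (r := 0) hπ (pad_gapPart_antitone G) (fun _ => le_rfl)
      fun i hi => pad_eq_zero_of_le _ hi
    have hlam : (schur fun i : Fin (k + (G.card - k + 0)) =>
        pad (fun a : Fin G.card => gapPart G G.card a) i) =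
        schur fun a : Fin G.card => gapPart G G.card a := by
      rw [add_zero, Nat.add_sub_cancel' hk]
      simp [pad]
    rw [← hsign, ← hlam, h, if_pos fun _ _ => rfl]
  · refine finsum_congr fun μ => ?_
    rw [smul_finsum, finsum_eq_if, finsum_eq_if, ite_and]
    refine if_ctx_congr Iff.rfl (fun hμ => ?_) fun _ => rfl
    rw [μ.schurP_eq (n := k + (G.card - k + μ.len)) (by lia),
      substPsum_pderivs_gapa hπ μ.anti hμ.1 fun i hi => μ.toFun_eq_zero_of_len_le (by lia)]
    split_ifs
    · rw [hsign, smul_eq_mul, mul_left_comm]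
    · rw [coeff_zero, mul_zero]

end GapDerivatives

theorem statement18_general (G : Finset ℕ) (ξ : Ptn → ℂ) {k : ℕ} (hk : k ≤ G.card)
    (π : Equiv.Perm (Fin (G.card - k)))
    (hπ : ∀ j, (π j : ℕ) = G.card - k - 1 - gapTuple G G.card k j) :
    (∀ γ : Fin k →₀ ℕ,
      evalPS k (derivsCoeff ((List.range (gapm G G.card k)).map (gapa G G.card k))
          (tauCoeff (fun a : Fin G.card => gapPart G G.card a) ξ)) γ
        = ((Equiv.Perm.sign π : ℤ) : ℂ)
            * evalPS k (tauKCoeff (fun a : Fin G.card => gapPart G G.card a) ξ k) γ)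
    ∧ (∀ h1 : 1 ≤ k,
        (∀ γ : Fin k →₀ ℕ, γ ⟨k - 1, by lia⟩ < gapPart G G.card (k - 1) →
          evalPS k (tauKCoeff (fun a : Fin G.card => gapPart G G.card a) ξ k) γ = 0)
        ∧ (∀ δ : Fin (k - 1) →₀ ℕ,
            evalPS k (tauKCoeff (fun a : Fin G.card => gapPart G G.card a) ξ k)
                (Finsupp.mapDomain (Fin.castLE (by lia)) δ
                  + Finsupp.single ⟨k - 1, by lia⟩ (gapPart G G.card (k - 1)))
              = evalPS (k - 1)
                  (tauKCoeff (fun a : Fin G.card => gapPart G G.card a) ξ (k - 1)) δ)) := by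
  refine ⟨evalPS_derivsCoeff_gapa hπ hk ξ, fun h1 => ?_⟩
  obtain ⟨n, rfl⟩ : ∃ n, k = n + 1 := Nat.exists_eq_add_of_le' h1
  have hlam := pad_gapPart_antitone G
  have hpad : gapPart G G.card n = pad (fun a : Fin G.card => gapPart G G.card a) n :=
    (pad_gapPart_of_lt hk).symm
  simp only [Nat.add_sub_cancel]
  rw [hpad]
  exact ⟨fun γ hγ => evalPS_tauKCoeff_of_lt hlam ξ hk hγ, evalPS_tauKCoeff_last hlam ξ hk⟩

/-- Let `λ` be the partition associated to a gap sequence `G` of genus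
`g`, `ξ_μ ∈ ℂ` arbitrary, `τ(t) = s_λ(t) + Σ_{λ<μ} ξ_μ s_μ(t)` and, for `0 ≤ k ≤ g`,
`τ^{(k)}(t) = s_{(λ_1,...,λ_k)}(t) + Σ_μ ξ_μ s_{(μ_1,...,μ_k)}(t)` (the sum over
partitions `μ` with `λ < μ` and `μ_i = λ_i` for `i ≥ k+1`). Then:
(i) `∂_{a^{(k)}_1} ⋯ ∂_{a^{(k)}_{m_k}} τ` at `t = [x_1]+⋯+[x_k]` equals
`c_k · τ^{(k)}([x_1]+⋯+[x_k])` as formal power series in `x_1,...,x_k`, with `c_k` the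
sign of the permutation `π` of `{0,...,g-k-1}` determined by
`(w_1^*,...,w_{m_k}^*, w_{g-k-m_k},...,w_1)` via `π j = g-k-1 - v_j`;
(ii) for `1 ≤ k ≤ g`,
`τ^{(k)}([x_1]+⋯+[x_k]) = τ^{(k-1)}([x_1]+⋯+[x_{k-1}])·x_k^{λ_k} + O(x_k^{λ_k+1})`:
coefficients of `x_k`-degree `< λ_k` vanish, and the coefficient of `x_k^{λ_k}` is the
corresponding coefficient of `τ^{(k-1)}([x_1]+⋯+[x_{k-1}])`. -/
theorem statement18 (g : ℕ) (hg : 1 ≤ g) (G : Finset ℕ)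
    (hcard : G.card = g) (h0 : 0 ∉ G)
    (hadd : ∀ a b : ℕ, a ∉ G → b ∉ G → a + b ∉ G)
    (ξ : Ptn → ℂ) (k : ℕ) (hk : k ≤ g)
    (π : Equiv.Perm (Fin (g - k)))
    (hπ : ∀ j : Fin (g - k), ((π j : ℕ))
        = g - k - 1 - (if (j : ℕ) < gapm G g k then wstar G j
            else wseq G (g - k - (j : ℕ) - 1))) :
    (∀ γ : Fin k →₀ ℕ,
      evalPS k (derivsCoeff ((List.range (gapm G g k)).map (gapa G g k))
          (tauCoeff (fun a : Fin g => gapPart G g a) ξ)) γ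
        = ((Equiv.Perm.sign π : ℤ) : ℂ)
            * evalPS k (tauKCoeff (fun a : Fin g => gapPart G g a) ξ k) γ)
    ∧ (∀ h1 : 1 ≤ k,
        (∀ γ : Fin k →₀ ℕ, γ ⟨k - 1, by omega⟩ < gapPart G g (k - 1) →
          evalPS k (tauKCoeff (fun a : Fin g => gapPart G g a) ξ k) γ = 0)
        ∧ (∀ δ : Fin (k - 1) →₀ ℕ,
            evalPS k (tauKCoeff (fun a : Fin g => gapPart G g a) ξ k)
                (Finsupp.mapDomain (Fin.castLE (by omega)) δ
                  + Finsupp.single ⟨k - 1, by omega⟩ (gapPart G g (k - 1)))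
              = evalPS (k - 1)
                  (tauKCoeff (fun a : Fin g => gapPart G g a) ξ (k - 1)) δ)) := by
  subst hcard
  exact statement18_general G ξ hk π hπ
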